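/- arXiv:2203.02376 — 7 statements merged into one kernel-verified Lean document; each statement's English description precedes it below -/
import Mathlib

section
/- Let N ≥ 1 be an integer and μ > 0 a real number. Then the operator □ + μ·id on the space of N×N complex matrices is invertible, and the trace of its inverse equals Σ_{l=0}^{N−1} (2l+1)/(l(l+1)+μ). -/
open scoped BigOperators
open Matrix

noncomputable section

/-- The spin α = (N−1)/2. -/
def alphaN (N : ℕ) : ℝ := ((N : ℝ) - 1) / 2

/-- The raising operator J₊ of the spin-α irreducible representation of su(2) on ℂ^N,
    in the orthonormal weight basis |m⟩, m = α, α−1, …, −α (the basis vector of index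
    j : Fin N has weight m = α − j):  J₊|m⟩ = √(α(α+1) − m(m+1)) |m+1⟩. -/
def Jplus (N : ℕ) : Matrix (Fin N) (Fin N) ℂ :=
  Matrix.of fun i k =>
    if (i : ℕ) + 1 = (k : ℕ) then
      ((Real.sqrt (alphaN N * (alphaN N + 1)
        - (alphaN N - (k : ℕ)) * ((alphaN N - (k : ℕ)) + 1)) : ℝ) : ℂ)
    else 0

/-- The spin-α generators J₁, J₂, J₃ on ℂ^N:  J₃|m⟩ = m|m⟩ and
    J₁ ± iJ₂ = J₊/J₋ act as ladder operators, i.e. J₁ = (J₊ + J₋)/2,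
    J₂ = (J₊ − J₋)/(2i), with J₋ = J₊†. -/
def Jspin (N : ℕ) : Fin 3 → Matrix (Fin N) (Fin N) ℂ :=
  ![((2 : ℂ))⁻¹ • (Jplus N + (Jplus N)ᴴ),
    ((2 : ℂ) * Complex.I)⁻¹ • (Jplus N - (Jplus N)ᴴ),
    Matrix.diagonal fun j : Fin N => ((alphaN N - (j : ℕ) : ℝ) : ℂ)]

/-- The matrix Laplacian □Φ = Σ_{a=1}^{3} [J_a, [J_a, Φ]] as a linear endomorphism
    of the space of N×N complex matrices. -/
def boxOp (N : ℕ) : Module.End ℂ (Matrix (Fin N) (Fin N) ℂ) :=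
  ∑ a : Fin 3,
    (LinearMap.mulLeft ℂ (Jspin N a) - LinearMap.mulRight ℂ (Jspin N a)) ∘ₗ
      (LinearMap.mulLeft ℂ (Jspin N a) - LinearMap.mulRight ℂ (Jspin N a))

/-!
With `h = 2J₃`, `e = J₊`, `f = J₋` the operator `4□` is the Casimir operator `h² + 2(ef + fe)` of
`sl₂` in its adjoint action on matrices. The powers `eˡ`, `l < N`, are nonzero highest weight
vectors of weight `2l`, so applying `f` repeatedly to `eˡ` yields `2l + 1` eigenvectors of `□` with
eigenvalue `l(l + 1)`. Their joint eigenvalues under `4□` and `ad h` are distinct and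
`∑ (2l + 1) = N²`, so together they form a basis in which `□` is diagonal.
-/

theorem sum_fin_ite_eq_val {α : Type*} [AddCommMonoid α] (N m : ℕ) (F : ℕ → α) :
    ∑ x : Fin N, (if m = (x : ℕ) then F x else 0) = if m < N then F m else 0 := by
  rw [Fin.sum_univ_eq_sum_range (fun x => if m = x then F x else 0), Finset.sum_ite_eq]
  simp only [Finset.mem_range]

theorem card_sigma_fin_two_mul_add_one (N : ℕ) :
    Fintype.card (Σ l : Fin N, Fin (2 * (l : ℕ) + 1)) = N * N := by
  simp only [Fintype.card_sigma, Fintype.card_fin]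
  rw [Fin.sum_univ_eq_sum_range (fun l => 2 * l + 1) N]
  induction N with
  | zero => rfl
  | succ N ih =>
    rw [Finset.sum_range_succ, ih]
    ring

section Diagonal

variable {ι K V : Type*} [Fintype ι] [AddCommGroup V]

theorem trace_eq_sum_of_apply_basis [CommRing K] [Module K V] (b : Module.Basis ι K V)
    {T : Module.End K V} {c : ι → K} (hT : ∀ i, T (b i) = c i • b i) :
    LinearMap.trace K V T = ∑ i, c i := by
  classical
  rw [LinearMap.trace_eq_matrix_trace K b, Matrix.trace]
  exact Finset.sum_congr rfl fun i _ => by simp [LinearMap.toMatrix_apply, hT]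

theorem exists_inverse_trace_of_apply_basis [Field K] [Module K V] (b : Module.Basis ι K V)
    {T : Module.End K V} {c : ι → K} (hT : ∀ i, T (b i) = c i • b i) (hc : ∀ i, c i ≠ 0) :
    ∃ g : Module.End K V, T * g = 1 ∧ g * T = 1 ∧ LinearMap.trace K V g = ∑ i, (c i)⁻¹ := by
  let g : Module.End K V := b.constr K fun i => (c i)⁻¹ • b i
  have hg : ∀ i, g (b i) = (c i)⁻¹ • b i := b.constr_basis K _
  refine ⟨g, b.ext fun i => ?_, b.ext fun i => ?_, trace_eq_sum_of_apply_basis b hg⟩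
  · simp [hg, hT, smul_smul, inv_mul_cancel₀ (hc i)]
  · simp [hg, hT, smul_smul, mul_inv_cancel₀ (hc i)]

end Diagonal

section Casimir

open LieModule

variable {R L M : Type*} [CommRing R] [LieRing L] [LieAlgebra R L] [AddCommGroup M] [Module R M]
  [LieRingModule L M] [LieModule R L M] {h e f : L}

variable (R M) in
/-- The operator `h² + 2(ef + fe)` on a module over a Lie algebra. For an `sl₂` triple it is the
Casimir operator, normalised to act by `w(w + 2)` on the irreducible module of highest
weight `w`. -/
def sl2Casimir (h e f : L) : Module.End R M :=
  toEnd R L M h * toEnd R L M h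
    + 2 • (toEnd R L M e * toEnd R L M f + toEnd R L M f * toEnd R L M e)

theorem sl2Casimir_apply (h e f : L) (m : M) :
    sl2Casimir R M h e f m = ⁅h, ⁅h, m⁆⁆ + 2 • (⁅e, ⁅f, m⁆⁆ + ⁅f, ⁅e, m⁆⁆) :=
  rfl

theorem sl2Casimir_pow_toEnd_f {t : IsSl2Triple h e f} {m : M} {w : R}
    (P : t.HasPrimitiveVectorWith m w) (n : ℕ) :
    sl2Casimir R M h e f ((toEnd R L M f ^ n) m) = (w * (w + 2)) • (toEnd R L M f ^ n) m := by
  rw [sl2Casimir_apply, P.lie_h_pow_toEnd_f, lie_smul, P.lie_h_pow_toEnd_f, P.lie_f_pow_toEnd_f,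
    P.lie_e_pow_succ_toEnd_f]
  cases n with
  | zero =>
    rw [pow_zero, Module.End.one_apply, P.lie_e, lie_zero]
    push_cast
    module
  | succ n =>
    rw [P.lie_e_pow_succ_toEnd_f, lie_smul, P.lie_f_pow_toEnd_f]
    push_cast
    module

-- For fixed `w` the values lie in `[w² + w, w² + 3w]`; these intervals are disjoint.
theorem eq_and_eq_of_casimir_add_weight_eq {w w' n n' : ℕ} (hn : n ≤ w) (hn' : n' ≤ w')
    (heq : (w * (w + 2) + (w - 2 * n) : ℤ) = w' * (w' + 2) + (w' - 2 * n')) :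
    w = w' ∧ n = n' := by
  have hw : w = w' := by
    rcases lt_trichotomy w w' with hlt | rfl | hlt
    · nlinarith
    · rfl
    · nlinarith
  subst hw
  exact ⟨rfl, by omega⟩

theorem linearIndependent_pow_toEnd_f [IsDomain R] [CharZero R] [Module.IsTorsionFree R M]
    (t : IsSl2Triple h e f) {ι : Type*} {m : ι → M} {w : ι → ℕ} (hw : Function.Injective w)
    (P : ∀ i, t.HasPrimitiveVectorWith (m i) (w i : R)) :
    LinearIndependent R
      fun x : Σ i, Fin (w i + 1) => (toEnd R L M f ^ (x.2 : ℕ)) (m x.1) := by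
  refine Module.End.eigenvectors_linearIndependent' (sl2Casimir R M h e f + toEnd R L M h)
    (fun x => (w x.1 * (w x.1 + 2) + (w x.1 - 2 * (x.2 : ℕ)) : R)) ?_ _ fun x => ⟨?_, ?_⟩
  · rintro ⟨i, n⟩ ⟨j, k⟩ heq
    dsimp only at heq
    obtain ⟨hij, hnk⟩ := eq_and_eq_of_casimir_add_weight_eq (Nat.lt_succ_iff.1 n.2)
      (Nat.lt_succ_iff.1 k.2) (by exact_mod_cast heq)
    obtain rfl := hw hij
    rw [Fin.ext hnk]
  · rw [Module.End.mem_eigenspace_iff, LinearMap.add_apply, sl2Casimir_pow_toEnd_f (P x.1),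
      toEnd_apply_apply, (P x.1).lie_h_pow_toEnd_f, ← add_smul]
  · exact (P x.1).pow_toEnd_f_ne_zero_of_eq_nat rfl (Nat.lt_succ_iff.1 x.2.2)

end Casimir

attribute [local instance] LieRing.ofAssociativeRing

section AssociativeAlgebra

variable {R A : Type*} [CommRing R] [Ring A] [Algebra R A]

theorem lie_pow_eq_smul_of_lie_eq_smul {h e : A} {c : R} (he : ⁅h, e⁆ = c • e) (l : ℕ) :
    ⁅h, e ^ l⁆ = (l * c) • e ^ l := by
  induction l with
  | zero => simp [Ring.lie_def]
  | succ l ih =>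
    calc ⁅h, e ^ (l + 1)⁆ = ⁅h, e ^ l⁆ * e + e ^ l * ⁅h, e⁆ := by
          simp only [Ring.lie_def, pow_succ]
          noncomm_ring
      _ = ((l + 1 : ℕ) * c) • e ^ (l + 1) := by
          rw [ih, he, smul_mul_assoc, mul_smul_comm, ← pow_succ, ← add_smul]
          push_cast
          ring_nf

theorem hasPrimitiveVectorWith_pow {h e f : A} (t : IsSl2Triple h e f) {l : ℕ} (hl : e ^ l ≠ 0) :
    t.HasPrimitiveVectorWith (e ^ l) ((2 * l : ℕ) : R) where
  ne_zero := hl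
  lie_h := by
    rw [lie_pow_eq_smul_of_lie_eq_smul (t.lie_h_e_smul R), mul_comm]
    push_cast
    rfl
  lie_e := (Commute.self_pow e l).lie_eq

end AssociativeAlgebra

/-- The matrix entry `√(k(N - k))` of `Jplus N` in column `k`, that is `√(α(α + 1) - m(m + 1))`
for `m = α - k`. -/
def ladderCoeff (N k : ℕ) : ℝ := √(k * (N - k))

theorem ladderCoeff_mul_self {N k : ℕ} (hk : k ≤ N) :
    (ladderCoeff N k : ℂ) * ladderCoeff N k = k * (N - k) := by
  have hk' : (0 : ℝ) ≤ N - k := sub_nonneg.2 (Nat.cast_le.2 hk)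
  rw [← Complex.ofReal_mul, ladderCoeff, Real.mul_self_sqrt (by positivity)]
  push_cast
  rfl

theorem ladderCoeff_ne_zero {N k : ℕ} (hk : 0 < k) (hkN : k < N) : ladderCoeff N k ≠ 0 := by
  have hkN' : (0 : ℝ) < N - k := sub_pos.2 (Nat.cast_lt.2 hkN)
  exact (Real.sqrt_pos.2 (by positivity)).ne'

theorem Jplus_apply (N : ℕ) (i k : Fin N) :
    Jplus N i k = if (i : ℕ) + 1 = k then (ladderCoeff N k : ℂ) else 0 := by
  simp only [Jplus, Matrix.of_apply, alphaN, ladderCoeff]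
  congr 4
  ring

theorem Jplus_mul_conjTranspose (N : ℕ) :
    Jplus N * (Jplus N)ᴴ = diagonal fun j : Fin N => ((j : ℂ) + 1) * (N - (j + 1)) := by
  ext i k
  simp only [Matrix.mul_apply, conjTranspose_apply, Jplus_apply, diagonal_apply, ite_mul, zero_mul]
  rw [sum_fin_ite_eq_val N (i + 1) fun x => (ladderCoeff N x : ℂ) *
    star (if (k : ℕ) + 1 = x then (ladderCoeff N x : ℂ) else 0)]
  rcases eq_or_ne i k with rfl | hik
  · have hsq := ladderCoeff_mul_self (Nat.succ_le_of_lt i.2)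
    push_cast at hsq
    rcases (Nat.succ_le_of_lt i.2).lt_or_eq with hi | hi
    · simp [hi, hsq]
    · simp [← hi]
  · simp [hik, Fin.val_ne_of_ne hik.symm]

theorem conjTranspose_mul_Jplus (N : ℕ) :
    (Jplus N)ᴴ * Jplus N = diagonal fun j : Fin N => (j : ℂ) * (N - j) := by
  ext i k
  simp only [Matrix.mul_apply, conjTranspose_apply, Jplus_apply, diagonal_apply]
  rcases eq_or_ne i k with rfl | hik
  · rw [if_pos rfl, ← ladderCoeff_mul_self i.2.le]
    obtain ⟨_ | m, hm⟩ := i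
    · simp [ladderCoeff]
    · have hsum := sum_fin_ite_eq_val N m fun _ =>
        (ladderCoeff N (m + 1) : ℂ) * ladderCoeff N (m + 1)
      rw [if_pos (Nat.lt_of_succ_lt hm)] at hsum
      refine Eq.trans (Finset.sum_congr rfl fun x _ => ?_) hsum
      by_cases hx : m = x <;> simp [hx, eq_comm]
  · rw [if_neg hik]
    refine Finset.sum_eq_zero fun x _ => ?_
    split_ifs with hi hk
    · exact absurd (Fin.ext (hi.symm.trans hk)) hik
    all_goals simp

theorem Jplus_pow_apply (N l : ℕ) (i k : Fin N) :
    (Jplus N ^ l) i k =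
      if (i : ℕ) + l = k then ∏ j ∈ Finset.range l, (ladderCoeff N (i + j + 1) : ℂ) else 0 := by
  induction l generalizing k with
  | zero => simp [Matrix.one_apply, Fin.ext_iff]
  | succ l ih =>
    simp only [pow_succ, Matrix.mul_apply, ih, Jplus_apply, Finset.prod_range_succ, ite_mul,
      zero_mul]
    rw [sum_fin_ite_eq_val N (i + l) fun x => (∏ j ∈ Finset.range l,
      (ladderCoeff N (i + j + 1) : ℂ)) * if x + 1 = (k : ℕ) then (ladderCoeff N k : ℂ) else 0]
    by_cases hk : (i : ℕ) + (l + 1) = k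
    · rw [if_pos (by omega), if_pos (by omega), if_pos hk, ← hk, add_assoc _ l 1]
    · rw [if_neg (c := _ + l + 1 = _) hk, if_neg hk, mul_zero, ite_self]

theorem Jplus_pow_ne_zero {N l : ℕ} (hl : l < N) : Jplus N ^ l ≠ 0 := by
  intro h
  have hentry : (Jplus N ^ l) ⟨0, by omega⟩ ⟨l, hl⟩ = 0 := by rw [h, Matrix.zero_apply]
  rw [Jplus_pow_apply, if_pos (Nat.zero_add l), Finset.prod_eq_zero_iff] at hentry
  obtain ⟨j, hj, hzero⟩ := hentry
  rw [Finset.mem_range] at hj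
  exact ladderCoeff_ne_zero (Nat.succ_pos _) (by simp only; omega) (Complex.ofReal_eq_zero.1 hzero)

/-- The matrix `2J₃`, which completes `Jplus N` and its adjoint to an `sl₂` triple. -/
def twoJ3 (N : ℕ) : Matrix (Fin N) (Fin N) ℂ :=
  diagonal fun j : Fin N => (N : ℂ) - 1 - 2 * j

theorem Jspin_two (N : ℕ) : Jspin N 2 = (2 : ℂ)⁻¹ • twoJ3 N := by
  rw [twoJ3, ← diagonal_smul]
  refine congrArg diagonal (funext fun j => ?_)
  simp only [alphaN, Pi.smul_apply, smul_eq_mul]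
  push_cast
  ring

theorem lie_Jplus_conjTranspose (N : ℕ) : ⁅Jplus N, (Jplus N)ᴴ⁆ = twoJ3 N := by
  rw [Ring.lie_def, Jplus_mul_conjTranspose, conjTranspose_mul_Jplus, diagonal_sub, twoJ3]
  refine congrArg diagonal (funext fun j => ?_)
  ring

theorem lie_twoJ3_Jplus (N : ℕ) : ⁅twoJ3 N, Jplus N⁆ = 2 • Jplus N := by
  ext i k
  simp only [Ring.lie_def, twoJ3, Matrix.sub_apply, diagonal_mul, mul_diagonal,
    Matrix.smul_apply, Jplus_apply]
  split_ifs with hik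
  · rw [← hik]
    push_cast
    ring
  · simp

theorem twoJ3_conjTranspose (N : ℕ) : (twoJ3 N)ᴴ = twoJ3 N := by
  rw [twoJ3, diagonal_conjTranspose]
  refine congrArg diagonal (funext fun j => ?_)
  simp

theorem isSl2Triple_twoJ3 {N : ℕ} (hN : 2 ≤ N) : IsSl2Triple (twoJ3 N) (Jplus N) (Jplus N)ᴴ where
  h_ne_zero h := by
    have hentry : twoJ3 N ⟨0, by omega⟩ ⟨0, by omega⟩ = 0 := by rw [h, Matrix.zero_apply]
    have hN' : N = 1 := by
      simpa [twoJ3, sub_eq_zero] using hentry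
    omega
  lie_e_f := lie_Jplus_conjTranspose N
  lie_h_e_nsmul := lie_twoJ3_Jplus N
  lie_h_f_nsmul := by
    have hadj := congrArg conjTranspose (lie_twoJ3_Jplus N)
    rw [Ring.lie_def, conjTranspose_sub, conjTranspose_mul, conjTranspose_mul,
      twoJ3_conjTranspose, conjTranspose_nsmul] at hadj
    rw [Ring.lie_def, ← neg_sub, hadj]

theorem boxOp_eq_smul_sl2Casimir (N : ℕ) :
    boxOp N = (4 : ℂ)⁻¹ •
      sl2Casimir ℂ (Matrix (Fin N) (Fin N) ℂ) (twoJ3 N) (Jplus N) (Jplus N)ᴴ := by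
  ext1 Φ
  have hbox : boxOp N Φ = ∑ a : Fin 3, ⁅Jspin N a, ⁅Jspin N a, Φ⁆⁆ := by
    simp [boxOp, Ring.lie_def]
  have h0 : Jspin N 0 = (2 : ℂ)⁻¹ • (Jplus N + (Jplus N)ᴴ) := rfl
  have h1 : Jspin N 1 = (2 * Complex.I)⁻¹ • (Jplus N - (Jplus N)ᴴ) := rfl
  have hI : (2 * Complex.I)⁻¹ * (2 * Complex.I)⁻¹ = -(4 : ℂ)⁻¹ := by
    rw [← mul_inv, mul_mul_mul_comm, Complex.I_mul_I]
    norm_num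
  have h4 : (2 : ℂ)⁻¹ * 2⁻¹ = 4⁻¹ := by norm_num
  rw [hbox, Fin.sum_univ_three, h0, h1, Jspin_two, LinearMap.smul_apply, sl2Casimir_apply]
  simp only [smul_lie, lie_smul, add_lie, sub_lie, lie_add, lie_sub, smul_add, smul_sub, smul_smul,
    hI, h4]
  module

theorem boxOp_pow_toEnd_Jplus_pow {N l : ℕ} (hN : 2 ≤ N) (hl : l < N) (n : ℕ) :
    boxOp N ((LieModule.toEnd ℂ _ _ (Jplus N)ᴴ ^ n) (Jplus N ^ l)) =
      (l * (l + 1) : ℂ) • (LieModule.toEnd ℂ _ _ (Jplus N)ᴴ ^ n) (Jplus N ^ l) := by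
  have P := hasPrimitiveVectorWith_pow (R := ℂ) (isSl2Triple_twoJ3 hN) (Jplus_pow_ne_zero hl)
  rw [boxOp_eq_smul_sl2Casimir, LinearMap.smul_apply, sl2Casimir_pow_toEnd_f P, smul_smul]
  push_cast
  ring_nf

theorem boxOp_eq_zero_of_le_one {N : ℕ} (hN : N ≤ 1) : boxOp N = 0 := by
  have : Subsingleton (Fin N) := Fin.subsingleton_iff_le_one.2 hN
  ext1 Φ
  have hcomm (A B : Matrix (Fin N) (Fin N) ℂ) : A * B = B * A := by
    ext i j
    simp only [Matrix.mul_apply]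
    exact Finset.sum_congr rfl fun k _ => by
      rw [Subsingleton.elim i k, Subsingleton.elim j k, mul_comm]
  simp [boxOp, hcomm _ Φ]

theorem exists_basis_boxOp_apply (N : ℕ) :
    ∃ b : Module.Basis (Σ l : Fin N, Fin (2 * (l : ℕ) + 1)) ℂ (Matrix (Fin N) (Fin N) ℂ),
      ∀ x, boxOp N (b x) = ((x.1 : ℕ) * ((x.1 : ℕ) + 1) : ℂ) • b x := by
  have hcard : Fintype.card (Σ l : Fin N, Fin (2 * (l : ℕ) + 1)) =
      Module.finrank ℂ (Matrix (Fin N) (Fin N) ℂ) := by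
    rw [card_sigma_fin_two_mul_add_one, Module.finrank_matrix, Fintype.card_fin,
      Module.finrank_self, mul_one]
  -- `IsSl2Triple` demands `h ≠ 0`, which fails for `N = 1`.
  rcases Nat.lt_or_ge 1 N with hN | hN
  · have hind := linearIndependent_pow_toEnd_f (isSl2Triple_twoJ3 hN)
      (w := fun l : Fin N => 2 * (l : ℕ)) (fun l l' hll' => Fin.ext (by simpa using hll'))
      fun l => hasPrimitiveVectorWith_pow (R := ℂ) (isSl2Triple_twoJ3 hN) (Jplus_pow_ne_zero l.2)
    have : Nonempty (Σ l : Fin N, Fin (2 * (l : ℕ) + 1)) := ⟨⟨⟨0, by omega⟩, 0⟩⟩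
    refine ⟨basisOfLinearIndependentOfCardEqFinrank hind hcard, fun x => ?_⟩
    rw [coe_basisOfLinearIndependentOfCardEqFinrank]
    exact boxOp_pow_toEnd_Jplus_pow hN x.1.2 x.2
  · refine ⟨(Module.finBasis ℂ _).reindex (Fintype.equivFinOfCardEq hcard).symm, fun x => ?_⟩
    have hx : (x.1 : ℕ) = 0 := by omega
    rw [boxOp_eq_zero_of_le_one hN, hx]
    simp

theorem boxOp_resolvent_trace_general (N : ℕ) (μ : ℂ)
    (hμ : ∀ l < N, (l : ℂ) * ((l : ℂ) + 1) + μ ≠ 0) :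
    ∃ g : Module.End ℂ (Matrix (Fin N) (Fin N) ℂ),
      (boxOp N + μ • (1 : Module.End ℂ (Matrix (Fin N) (Fin N) ℂ))) * g = 1 ∧
      g * (boxOp N + μ • (1 : Module.End ℂ (Matrix (Fin N) (Fin N) ℂ))) = 1 ∧
      LinearMap.trace ℂ (Matrix (Fin N) (Fin N) ℂ) g
        = ∑ l ∈ Finset.range N, (2 * (l : ℂ) + 1) / ((l : ℂ) * ((l : ℂ) + 1) + μ) := by
  obtain ⟨b, hb⟩ := exists_basis_boxOp_apply N
  obtain ⟨g, hright, hleft, htrace⟩ := exists_inverse_trace_of_apply_basis b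
    (T := boxOp N + μ • 1) (c := fun x => (x.1 : ℕ) * ((x.1 : ℕ) + 1) + μ)
    (fun x => by simp [hb, add_smul]) fun x => hμ x.1 x.1.2
  refine ⟨g, hright, hleft, htrace.trans ?_⟩
  rw [Fintype.sum_sigma, ← Fin.sum_univ_eq_sum_range
    fun l : ℕ => (2 * (l : ℂ) + 1) / ((l : ℂ) * ((l : ℂ) + 1) + μ)]
  simp [div_eq_mul_inv]

/-- for μ > 0 the operator □ + μ·id on N×N complex matrices is
    invertible, and the trace of its inverse is Σ_{l=0}^{N−1} (2l+1)/(l(l+1)+μ). -/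
theorem boxOp_resolvent_trace (N : ℕ) (hN : 1 ≤ N) (μ : ℝ) (hμ : 0 < μ) :
    ∃ g : Module.End ℂ (Matrix (Fin N) (Fin N) ℂ),
      (boxOp N + (μ : ℂ) • (1 : Module.End ℂ (Matrix (Fin N) (Fin N) ℂ))) * g = 1 ∧
      g * (boxOp N + (μ : ℂ) • (1 : Module.End ℂ (Matrix (Fin N) (Fin N) ℂ))) = 1 ∧
      LinearMap.trace ℂ (Matrix (Fin N) (Fin N) ℂ) g
        = ∑ l ∈ Finset.range N,
            (2 * (l : ℂ) + 1) / ((l : ℂ) * ((l : ℂ) + 1) + (μ : ℂ)) := by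
  refine boxOp_resolvent_trace_general N μ fun l _ => ?_
  exact_mod_cast (by positivity : (l : ℝ) * (l + 1) + μ ≠ 0)
end
end

section
/- Let n ≥ 1, let ξ = v(θ,φ)^{⊗n} and η = v(θ',φ')^{⊗n}, let x = x(θ,φ) and y = x(θ',φ') be the corresponding points of S², and let Ψ = |ξ⟩⟨η| be the rank-one operator z ↦ ⟨η, z⟩ ξ on (ℂ²)^{⊗n}. Then Σ_{a=1}^{3} ‖[J_a, Ψ]‖_F² = n + (n²/4)·|x−y|², where ‖·‖_F is the Frobenius (Hilbert–Schmidt) norm and |x−y| is the Euclidean distance in ℝ³. (This is the exact form of the statement that string modes are approximate eigenstates of the matrix Laplacian with energy E_{xy} given by the squared string length plus the intrinsic quantum scale.) -/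
open scoped BigOperators ComplexConjugate
open Matrix

noncomputable section

/-- The three Pauli matrices acting on ℂ². -/
def pauli : Fin 3 → Matrix (Fin 2) (Fin 2) ℂ :=
  ![!![0, 1; 1, 0], !![0, -Complex.I; Complex.I, 0], !![1, 0; 0, -1]]

/-- The coherent spinor v(θ,φ) = (cos(θ/2), e^{iφ} sin(θ/2)) ∈ ℂ². -/
def vcoh (θ φ : ℝ) : Fin 2 → ℂ :=
  ![(Real.cos (θ / 2) : ℂ), Complex.exp (Complex.I * (φ : ℂ)) * (Real.sin (θ / 2) : ℂ)]

/-- The point x(θ,φ) = (sin θ cos φ, sin θ sin φ, cos θ) ∈ S² ⊂ ℝ³. -/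
def xpt (θ φ : ℝ) : Fin 3 → ℝ :=
  ![Real.sin θ * Real.cos φ, Real.sin θ * Real.sin φ, Real.cos θ]

/-- The n-th tensor power u^{⊗n} of u ∈ ℂ², realized concretely as the function
    (Fin n → Fin 2) → ℂ, f ↦ ∏ i, u (f i). -/
def tpow (n : ℕ) (u : Fin 2 → ℂ) : (Fin n → Fin 2) → ℂ :=
  fun f => ∏ i, u (f i)

/-- The standard Hermitian inner product (antilinear in the first argument). -/
def cinner {ι : Type} [Fintype ι] (ξ η : ι → ℂ) : ℂ :=
  ∑ f, conj (ξ f) * η f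

/-- The angular momentum operator J_a = Σ_i 1⊗…⊗(σ_a/2)⊗…⊗1 on (ℂ²)^{⊗n},
    as a matrix acting (via `Matrix.mulVec`) on the concrete model
    (Fin n → Fin 2) → ℂ of (ℂ²)^{⊗n}. -/
def Jmat (n : ℕ) (a : Fin 3) : Matrix (Fin n → Fin 2) (Fin n → Fin 2) ℂ :=
  Matrix.of fun f g => ∑ i : Fin n, ∑ k : Fin 2,
    (pauli a (f i) k / 2) * (if Function.update f i k = g then 1 else 0)

/-- The rank-one string mode Ψ = |ξ⟩⟨η| with ξ = v(θ,φ)^{⊗n}, η = v(θ',φ')^{⊗n},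
    as a matrix: z ↦ ⟨η, z⟩ ξ. -/
def stringMode (n : ℕ) (θ φ θ' φ' : ℝ) : Matrix (Fin n → Fin 2) (Fin n → Fin 2) ℂ :=
  Matrix.of fun f g => tpow n (vcoh θ φ) f * conj (tpow n (vcoh θ' φ') g)

/-!
Write `⟨A⟩_ξ = ξ†Aξ` and `Var_ξ A = ⟨A²⟩_ξ - ⟨A⟩_ξ²`. For Hermitian `A` and unit `ξ`, `η`, expanding
`tr (MᴴM)` for `M = [A, |ξ⟩⟨η|]` gives

  `‖[A, |ξ⟩⟨η|]‖_F² = Var_ξ A + Var_η A + (⟨A⟩_ξ - ⟨A⟩_η)²`.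

Expectation and variance of a sum of one-site operators are additive on product states, so with
`A = J_a` the right-hand side is `n` times the one-site variances plus `n²` times the square of the
one-site difference. The coherent spinor has `⟨σ_a/2⟩ = x_a/2` and, because `σ_a² = 1`, variance
`(1 - x_a²)/4`. Summing over `a` with `|x| = |y| = 1`, the variances contribute `n/2 + n/2` and the
differences of expectations contribute `n²/4 · |x - y|²`.
-/

section Expectation

variable {R m : Type*} [Fintype m]

/-- The quantum expectation `⟨A⟩_ξ = ξ†Aξ`; it is the mean of `A` only when `ξ` is a unit vector. -/
def expectation [Semiring R] [StarRing R] (A : Matrix m m R) (ξ : m → R) : R :=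
  star ξ ⬝ᵥ A *ᵥ ξ

/-- The quantum variance `⟨A²⟩_ξ - ⟨A⟩_ξ²`, left as an element of the scalar ring: over `ℂ` it is
real when `A` is Hermitian. -/
def variance [Ring R] [StarRing R] (A : Matrix m m R) (ξ : m → R) : R :=
  expectation (A * A) ξ - expectation A ξ ^ 2

variable [Semiring R] [StarRing R]

lemma expectation_sum {ι : Type*} (s : Finset ι) (A : ι → Matrix m m R) (ξ : m → R) :
    expectation (∑ i ∈ s, A i) ξ = ∑ i ∈ s, expectation (A i) ξ := by
  simp only [expectation, sum_mulVec, dotProduct_sum]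

lemma star_mulVec_dotProduct_of_isHermitian {A : Matrix m m R} (hA : A.IsHermitian)
    (ξ v : m → R) : star (A *ᵥ ξ) ⬝ᵥ v = star ξ ⬝ᵥ A *ᵥ v := by
  rw [star_mulVec, hA.eq, dotProduct_mulVec]

end Expectation

section Commutator

variable {R 𝕜 m n : Type*} [CommRing R] [StarRing R] [RCLike 𝕜] [Fintype m] [Fintype n]

lemma sum_norm_sq_eq_trace_conjTranspose_mul_self (M : Matrix m n 𝕜) :
    ((∑ i, ∑ j, ‖M i j‖ ^ 2 : ℝ) : 𝕜) = (Mᴴ * M).trace := by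
  simp only [trace, diag_apply, mul_apply, conjTranspose_apply, RCLike.star_def, RCLike.conj_mul]
  rw [Finset.sum_comm]
  push_cast
  rfl

lemma trace_conjTranspose_mul_self_vecMulVec_sub_vecMulVec (a ξ : m → R) (b η : n → R) :
    ((vecMulVec a (star η) - vecMulVec ξ (star b))ᴴ
        * (vecMulVec a (star η) - vecMulVec ξ (star b))).trace
      = (star a ⬝ᵥ a) * (star η ⬝ᵥ η) + (star ξ ⬝ᵥ ξ) * (star b ⬝ᵥ b)
        - (star a ⬝ᵥ ξ) * (star b ⬝ᵥ η) - (star ξ ⬝ᵥ a) * (star η ⬝ᵥ b) := by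
  simp only [conjTranspose_sub, conjTranspose_vecMulVec, star_star, Matrix.sub_mul, Matrix.mul_sub,
    vecMulVec_mul_vecMulVec, trace_sub, trace_vecMulVec, dotProduct_smul, smul_eq_mul,
    dotProduct_comm _ (star _)]
  ring

lemma sum_norm_sq_mul_vecMulVec_sub_vecMulVec_mul {A : Matrix m m 𝕜} {B : Matrix n n 𝕜}
    (hA : A.IsHermitian) (hB : B.IsHermitian) {ξ : m → 𝕜} {η : n → 𝕜}
    (hξ : star ξ ⬝ᵥ ξ = 1) (hη : star η ⬝ᵥ η = 1) :
    ((∑ i, ∑ j, ‖(A * vecMulVec ξ (star η) - vecMulVec ξ (star η) * B) i j‖ ^ 2 : ℝ) : 𝕜)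
      = variance A ξ + variance B η + (expectation A ξ - expectation B η) ^ 2 := by
  have hηB : star η ᵥ* B = star (B *ᵥ η) := by rw [star_mulVec, hB.eq]
  rw [sum_norm_sq_eq_trace_conjTranspose_mul_self, mul_vecMulVec, vecMulVec_mul, hηB,
    trace_conjTranspose_mul_self_vecMulVec_sub_vecMulVec]
  simp only [star_mulVec_dotProduct_of_isHermitian hA,
    star_mulVec_dotProduct_of_isHermitian hB, hξ, hη, mulVec_mulVec,
    variance, expectation]
  ring

end Commutator

section ProductTensor

variable {ι R : Type*} {κ : ι → Type*} [Fintype ι] [CommSemiring R]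

/-- The product tensor `⨂ᵢ pᵢ`, in the model of `⨂ᵢ R^(κ i)` by functions on `∀ i, κ i`. -/
def productTensor (p : ∀ i, κ i → R) : (∀ i, κ i) → R :=
  fun f => ∏ i, p i (f i)

lemma star_productTensor [StarRing R] (p : ∀ i, κ i → R) :
    star (productTensor p) = productTensor fun i => star (p i) :=
  funext fun _ => star_prod _ _

variable [DecidableEq ι]

lemma productTensor_update (p : ∀ i, κ i → R) (i : ι) (v : κ i → R) (f : ∀ i, κ i) :
    productTensor (Function.update p i v) f = v (f i) * ∏ j ∈ Finset.univ \ {i}, p j (f j) := by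
  simp only [productTensor, Function.apply_update fun j (q : κ j → R) => q (f j),
    Finset.prod_update_of_mem (Finset.mem_univ i)]

lemma productTensor_apply_update (p : ∀ i, κ i → R) (f : ∀ i, κ i) (i : ι) (k : κ i) :
    productTensor p (Function.update f i k) = p i k * ∏ j ∈ Finset.univ \ {i}, p j (f j) := by
  simp only [productTensor, Function.apply_update p, Finset.prod_update_of_mem (Finset.mem_univ i)]

variable [∀ i, Fintype (κ i)]

lemma productTensor_dotProduct_productTensor (p q : ∀ i, κ i → R) :
    productTensor p ⬝ᵥ productTensor q = ∏ i, p i ⬝ᵥ q i := by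
  simp only [dotProduct, productTensor, Finset.prod_univ_sum, Fintype.piFinset_univ,
    Finset.prod_mul_distrib]

lemma star_productTensor_dotProduct_productTensor [StarRing R] (p q : ∀ i, κ i → R) :
    star (productTensor p) ⬝ᵥ productTensor q = ∏ i, star (p i) ⬝ᵥ q i := by
  rw [star_productTensor, productTensor_dotProduct_productTensor]

lemma star_productTensor_dotProduct_self [StarRing R] {p : ∀ i, κ i → R}
    (hp : ∀ i, star (p i) ⬝ᵥ p i = 1) : star (productTensor p) ⬝ᵥ productTensor p = 1 := by
  simp only [star_productTensor_dotProduct_productTensor, hp, Finset.prod_const_one]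

lemma star_productTensor_dotProduct_update [StarRing R] {p : ∀ i, κ i → R}
    (hp : ∀ i, star (p i) ⬝ᵥ p i = 1) (i : ι) (v : κ i → R) :
    star (productTensor p) ⬝ᵥ productTensor (Function.update p i v) = star (p i) ⬝ᵥ v := by
  rw [star_productTensor_dotProduct_productTensor, Fintype.prod_eq_single i, Function.update_self]
  intro j hj
  rw [Function.update_of_ne hj, hp]

end ProductTensor

section LocalOperator

variable {ι R : Type*} {κ : ι → Type*} [Fintype ι] [DecidableEq ι] [∀ i, DecidableEq (κ i)]
  [CommSemiring R]

/-- The operator `1 ⊗ … ⊗ A ⊗ … ⊗ 1` with `A` at site `i`. -/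
def localOperator (i : ι) (A : Matrix (κ i) (κ i) R) : Matrix (∀ i, κ i) (∀ i, κ i) R :=
  of fun f g => if ∀ j ≠ i, f j = g j then A (f i) (g i) else 0

lemma isHermitian_localOperator [StarRing R] {i : ι} {A : Matrix (κ i) (κ i) R}
    (hA : A.IsHermitian) : (localOperator i A).IsHermitian := by
  ext f g
  simp only [conjTranspose_apply, localOperator, of_apply, apply_ite star, star_zero, hA.apply,
    eq_comm]

variable [∀ i, Fintype (κ i)]

lemma localOperator_apply_eq_sum (i : ι) (A : Matrix (κ i) (κ i) R) (f g : ∀ i, κ i) :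
    localOperator i A f g = ∑ k, A (f i) k * if Function.update f i k = g then 1 else 0 := by
  simp only [localOperator, of_apply, Function.update_eq_iff, ite_and, mul_ite, mul_one, mul_zero,
    Finset.sum_ite_eq', Finset.mem_univ, if_true]

lemma localOperator_mulVec_apply (i : ι) (A : Matrix (κ i) (κ i) R) (v : (∀ i, κ i) → R)
    (f : ∀ i, κ i) :
    (localOperator i A *ᵥ v) f = ∑ k, A (f i) k * v (Function.update f i k) := by
  simp only [mulVec, dotProduct, localOperator_apply_eq_sum, Finset.sum_mul]
  rw [Finset.sum_comm]
  simp only [mul_ite, mul_one, mul_zero, ite_mul, zero_mul, Finset.sum_ite_eq, Finset.mem_univ,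
    if_true]

lemma localOperator_mulVec_productTensor (i : ι) (A : Matrix (κ i) (κ i) R) (p : ∀ i, κ i → R) :
    localOperator i A *ᵥ productTensor p
      = productTensor (Function.update p i (A *ᵥ p i)) := by
  ext f
  rw [localOperator_mulVec_apply, productTensor_update, mulVec, dotProduct, Finset.sum_mul]
  simp only [productTensor_apply_update, mul_assoc]

end LocalOperator

section ProductState

variable {ι R : Type*} {κ : ι → Type*} [Fintype ι] [DecidableEq ι] [∀ i, Fintype (κ i)]
  [∀ i, DecidableEq (κ i)]

section Semiring

variable [CommSemiring R] [StarRing R] {p : ∀ i, κ i → R}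

lemma expectation_localOperator (hp : ∀ i, star (p i) ⬝ᵥ p i = 1) (i : ι)
    (A : Matrix (κ i) (κ i) R) :
    expectation (localOperator i A) (productTensor p) = expectation A (p i) := by
  rw [expectation, localOperator_mulVec_productTensor, star_productTensor_dotProduct_update hp,
    expectation]

lemma expectation_localOperator_mul (hp : ∀ i, star (p i) ⬝ᵥ p i = 1) (i : ι)
    (A B : Matrix (κ i) (κ i) R) :
    expectation (localOperator i A * localOperator i B) (productTensor p)
      = expectation (A * B) (p i) := by
  rw [expectation, ← mulVec_mulVec, localOperator_mulVec_productTensor,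
    localOperator_mulVec_productTensor, Function.update_self, Function.update_idem,
    star_productTensor_dotProduct_update hp, mulVec_mulVec, expectation]

lemma expectation_localOperator_mul_of_ne (hp : ∀ i, star (p i) ⬝ᵥ p i = 1) {i j : ι} (hij : i ≠ j)
    (A : Matrix (κ i) (κ i) R) (B : Matrix (κ j) (κ j) R) :
    expectation (localOperator i A * localOperator j B) (productTensor p)
      = expectation A (p i) * expectation B (p j) := by
  rw [expectation, ← mulVec_mulVec, localOperator_mulVec_productTensor,
    localOperator_mulVec_productTensor, star_productTensor_dotProduct_productTensor,
    Fintype.prod_eq_mul i j hij]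
  · simp only [Function.update_self, Function.update_of_ne hij, Function.update_of_ne hij.symm,
      expectation]
  · rintro k ⟨hki, hkj⟩
    rw [Function.update_of_ne hki, Function.update_of_ne hkj, hp]

lemma expectation_sum_localOperator (hp : ∀ i, star (p i) ⬝ᵥ p i = 1)
    (A : ∀ i, Matrix (κ i) (κ i) R) :
    expectation (∑ i, localOperator i (A i)) (productTensor p) = ∑ i, expectation (A i) (p i) := by
  simp only [expectation_sum, expectation_localOperator hp]

end Semiring

lemma variance_sum_localOperator [CommRing R] [StarRing R] {p : ∀ i, κ i → R}
    (hp : ∀ i, star (p i) ⬝ᵥ p i = 1)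
    (A : ∀ i, Matrix (κ i) (κ i) R) :
    variance (∑ i, localOperator i (A i)) (productTensor p) = ∑ i, variance (A i) (p i) := by
  have hcov (i j : ι) :
      expectation (localOperator i (A i) * localOperator j (A j)) (productTensor p)
        - expectation (A i) (p i) * expectation (A j) (p j)
        = if i = j then variance (A i) (p i) else 0 := by
    rcases eq_or_ne i j with rfl | hij
    · rw [if_pos rfl, expectation_localOperator_mul hp, variance, sq]
    · rw [if_neg hij, expectation_localOperator_mul_of_ne hp hij, sub_self]
  calc variance (∑ i, localOperator i (A i)) (productTensor p)
      = ∑ i, ∑ j, (expectation (localOperator i (A i) * localOperator j (A j)) (productTensor p)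
          - expectation (A i) (p i) * expectation (A j) (p j)) := by
        simp only [variance, expectation_sum_localOperator hp, sq, Finset.sum_mul_sum,
          expectation_sum, Finset.sum_sub_distrib]
    _ = ∑ i, variance (A i) (p i) := by
        simp only [hcov, Finset.sum_ite_eq, Finset.mem_univ, if_true]

end ProductState

section CoherentSpinor

/-- The spin-½ operators `σ_a/2`. -/
def spin (a : Fin 3) : Matrix (Fin 2) (Fin 2) ℂ :=
  (1 / 2 : ℂ) • pauli a

lemma isHermitian_pauli (a : Fin 3) : (pauli a).IsHermitian := by
  ext k l
  fin_cases a <;> fin_cases k <;> fin_cases l <;> simp [pauli]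

lemma isHermitian_spin (a : Fin 3) : (spin a).IsHermitian := by
  rw [IsHermitian, spin, conjTranspose_smul, (isHermitian_pauli a).eq]
  norm_num

lemma pauli_mul_self (a : Fin 3) : pauli a * pauli a = 1 := by
  ext k l
  fin_cases a <;> fin_cases k <;> fin_cases l <;> simp [pauli]

lemma spin_mul_self (a : Fin 3) : spin a * spin a = (1 / 4 : ℂ) • 1 := by
  rw [spin, smul_mul_smul_comm, pauli_mul_self]
  norm_num

lemma expectation_pauli (a : Fin 3) (u : Fin 2 → ℂ) :
    expectation (pauli a) u
      = ![conj (u 0) * u 1 + conj (u 1) * u 0,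
          Complex.I * (conj (u 1) * u 0 - conj (u 0) * u 1),
          conj (u 0) * u 0 - conj (u 1) * u 1] a := by
  fin_cases a <;>
    simp only [expectation, pauli, dotProduct, mulVec, Fin.sum_univ_two, Pi.star_apply,
      RCLike.star_def, Fin.zero_eta, Fin.mk_one, Fin.reduceFinMk, of_apply, cons_val] <;>
    ring

lemma exp_I_mul_ofReal (φ : ℝ) :
    Complex.exp (Complex.I * φ) = Real.cos φ + Real.sin φ * Complex.I := by
  rw [mul_comm, Complex.exp_mul_I, Complex.ofReal_cos, Complex.ofReal_sin]

lemma conj_exp_I_mul_ofReal (φ : ℝ) :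
    conj (Complex.exp (Complex.I * φ)) = Real.cos φ - Real.sin φ * Complex.I := by
  rw [exp_I_mul_ofReal, map_add, map_mul, Complex.conj_ofReal, Complex.conj_ofReal, Complex.conj_I,
    mul_neg, sub_eq_add_neg]

lemma conj_exp_I_mul_ofReal_mul_self (φ : ℝ) :
    conj (Complex.exp (Complex.I * φ)) * Complex.exp (Complex.I * φ) = 1 := by
  rw [Complex.conj_mul', Complex.norm_exp_I_mul_ofReal, Complex.ofReal_one, one_pow]

lemma star_vcoh_dotProduct_vcoh (θ φ : ℝ) : star (vcoh θ φ) ⬝ᵥ vcoh θ φ = 1 := by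
  have hθ : (Real.sin (θ / 2) : ℂ) ^ 2 + (Real.cos (θ / 2) : ℂ) ^ 2 = 1 := by
    exact_mod_cast Real.sin_sq_add_cos_sq (θ / 2)
  simp only [dotProduct, Fin.sum_univ_two, vcoh, Pi.star_apply, cons_val_zero, cons_val_one,
    RCLike.star_def, map_mul, Complex.conj_ofReal]
  linear_combination hθ + (Real.sin (θ / 2) : ℂ) ^ 2 * conj_exp_I_mul_ofReal_mul_self φ

lemma expectation_pauli_vcoh (a : Fin 3) (θ φ : ℝ) :
    expectation (pauli a) (vcoh θ φ) = xpt θ φ a := by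
  have hsin : Real.sin θ = 2 * Real.sin (θ / 2) * Real.cos (θ / 2) := by
    rw [← Real.sin_two_mul, mul_div_cancel₀ θ two_ne_zero]
  have hcos : Real.cos θ = Real.cos (θ / 2) ^ 2 - Real.sin (θ / 2) ^ 2 := by
    rw [← Real.cos_two_mul', mul_div_cancel₀ θ two_ne_zero]
  rw [expectation_pauli]
  simp only [vcoh, xpt, hsin, hcos, cons_val_zero, cons_val_one, map_mul, Complex.conj_ofReal]
  fin_cases a <;> simp only [Fin.zero_eta, Fin.mk_one, Fin.reduceFinMk, cons_val] <;> push_cast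
  · rw [conj_exp_I_mul_ofReal, exp_I_mul_ofReal]
    push_cast
    ring
  · rw [conj_exp_I_mul_ofReal, exp_I_mul_ofReal]
    push_cast
    linear_combination -2 * Complex.cos (θ / 2) * Complex.sin (θ / 2) * Complex.sin φ * Complex.I_sq
  · linear_combination -(Complex.sin (θ / 2) ^ 2) * conj_exp_I_mul_ofReal_mul_self φ

lemma expectation_spin_vcoh (a : Fin 3) (θ φ : ℝ) :
    expectation (spin a) (vcoh θ φ) = xpt θ φ a / 2 := by
  have hspin : expectation (spin a) (vcoh θ φ) = 1 / 2 * expectation (pauli a) (vcoh θ φ) := by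
    simp only [expectation, spin, smul_mulVec, dotProduct_smul, smul_eq_mul]
  rw [hspin, expectation_pauli_vcoh]
  ring

lemma variance_spin_vcoh (a : Fin 3) (θ φ : ℝ) :
    variance (spin a) (vcoh θ φ) = (1 - xpt θ φ a ^ 2) / 4 := by
  have hsq : expectation (spin a * spin a) (vcoh θ φ) = 1 / 4 := by
    rw [expectation, spin_mul_self, smul_mulVec, one_mulVec, dotProduct_smul,
      star_vcoh_dotProduct_vcoh, smul_eq_mul, mul_one]
  rw [variance, hsq, expectation_spin_vcoh]
  ring

lemma sum_xpt_sq (θ φ : ℝ) : ∑ a, xpt θ φ a ^ 2 = 1 := by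
  simp only [Fin.sum_univ_three, xpt, cons_val]
  linear_combination Real.sin θ ^ 2 * Real.sin_sq_add_cos_sq φ + Real.sin_sq_add_cos_sq θ

end CoherentSpinor

section StringMode

lemma stringMode_eq_vecMulVec (n : ℕ) (θ φ θ' φ' : ℝ) :
    stringMode n θ φ θ' φ'
      = vecMulVec (productTensor fun _ => vcoh θ φ) (star (productTensor fun _ => vcoh θ' φ')) :=
  rfl

lemma Jmat_eq_sum_localOperator (n : ℕ) (a : Fin 3) :
    Jmat n a = ∑ i, localOperator i (spin a) := by
  ext f g
  simp only [Jmat, of_apply, Matrix.sum_apply, localOperator_apply_eq_sum, spin, Matrix.smul_apply,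
    smul_eq_mul, one_div_mul_eq_div]

lemma isHermitian_Jmat (n : ℕ) (a : Fin 3) : (Jmat n a).IsHermitian := by
  rw [Jmat_eq_sum_localOperator]
  exact isSelfAdjoint_sum _ fun i _ => isHermitian_localOperator (isHermitian_spin a)

lemma expectation_Jmat_productTensor_vcoh (n : ℕ) (a : Fin 3) (θ φ : ℝ) :
    expectation (Jmat n a) (productTensor fun _ => vcoh θ φ) = n * (xpt θ φ a / 2) := by
  rw [Jmat_eq_sum_localOperator,
    expectation_sum_localOperator fun _ => star_vcoh_dotProduct_vcoh θ φ]
  simp only [expectation_spin_vcoh, Finset.sum_const, Finset.card_univ, Fintype.card_fin,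
    nsmul_eq_mul]

lemma variance_Jmat_productTensor_vcoh (n : ℕ) (a : Fin 3) (θ φ : ℝ) :
    variance (Jmat n a) (productTensor fun _ => vcoh θ φ) = n * ((1 - xpt θ φ a ^ 2) / 4) := by
  rw [Jmat_eq_sum_localOperator,
    variance_sum_localOperator fun _ => star_vcoh_dotProduct_vcoh θ φ]
  simp only [variance_spin_vcoh, Finset.sum_const, Finset.card_univ, Fintype.card_fin,
    nsmul_eq_mul]

lemma sum_norm_sq_commutator_Jmat_stringMode (n : ℕ) (a : Fin 3) (θ φ θ' φ' : ℝ) :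
    ∑ f, ∑ g,
        ‖(Jmat n a * stringMode n θ φ θ' φ' - stringMode n θ φ θ' φ' * Jmat n a) f g‖ ^ 2
      = n / 4 * (1 - xpt θ φ a ^ 2) + n / 4 * (1 - xpt θ' φ' a ^ 2)
        + n ^ 2 / 4 * (xpt θ φ a - xpt θ' φ' a) ^ 2 := by
  have hunit (α β : ℝ) :
      star (productTensor fun _ : Fin n => vcoh α β) ⬝ᵥ (productTensor fun _ => vcoh α β) = 1 :=
    star_productTensor_dotProduct_self fun _ => star_vcoh_dotProduct_vcoh α β
  apply Complex.ofReal_injective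
  rw [stringMode_eq_vecMulVec]
  refine (sum_norm_sq_mul_vecMulVec_sub_vecMulVec_mul (isHermitian_Jmat n a) (isHermitian_Jmat n a)
    (hunit θ φ) (hunit θ' φ')).trans ?_
  simp only [expectation_Jmat_productTensor_vcoh, variance_Jmat_productTensor_vcoh]
  push_cast
  ring

end StringMode

/-- Σ_{a=1}^{3} ‖[J_a, Ψ]‖_F² = n + (n²/4)·|x−y|² for the string mode
    Ψ = |v(θ,φ)^{⊗n}⟩⟨v(θ',φ')^{⊗n}|, where x = x(θ,φ), y = x(θ',φ'). -/
theorem string_mode_laplacian_energy (n : ℕ) (hn : 1 ≤ n) (θ φ θ' φ' : ℝ) :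
    ∑ a : Fin 3, ∑ f, ∑ g,
        ‖(Jmat n a * stringMode n θ φ θ' φ' - stringMode n θ φ θ' φ' * Jmat n a) f g‖ ^ 2
      = (n : ℝ) + ((n : ℝ) ^ 2 / 4) * ∑ a : Fin 3, (xpt θ φ a - xpt θ' φ' a) ^ 2 := by
  have hvariance (α β : ℝ) : ∑ a, (n : ℝ) / 4 * (1 - xpt α β a ^ 2) = (n : ℝ) / 2 := by
    rw [← Finset.mul_sum, Finset.sum_sub_distrib, sum_xpt_sq, Finset.sum_const, Finset.card_univ,
      Fintype.card_fin]
    ring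
  simp only [sum_norm_sq_commutator_Jmat_stringMode, Finset.sum_add_distrib, hvariance,
    ← Finset.mul_sum, add_halves]
end
end

section
/- Let n ≥ 1, let A be a linear operator on (ℂ²)^{⊗n} whose Frobenius (Hilbert–Schmidt) norm satisfies ‖A‖_F ≤ 1, and let η ∈ (ℂ²)^{⊗n} be a unit vector. Fix φ₀ and define f(θ) = ⟨η, A(v(θ,φ₀)^{⊗n})⟩. Then f is differentiable and |f′(θ)| ≤ √n / 2 for all θ. (This is the paper's regularity estimate: the off-diagonal string symbol of a Hilbert–Schmidt-normalized operator varies on scales no shorter than the noncommutativity length, i.e. its gradient is bounded by 1/L_NC.) -/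
open scoped BigOperators ComplexConjugate
open Matrix

noncomputable section

/-!
The derivative of `v(θ,φ)` in `θ` is half the antipodal spinor `v(θ+π,φ)`, which is orthogonal to
`v(θ,φ)`. By the Leibniz rule the derivative of `v^{⊗n}` is therefore a sum of `n` pairwise
orthogonal vectors of norm `1/2`, and Pythagoras gives it norm `√n/2`, where the triangle inequality
would only give `n/2`. Pairing with `A` and `η` costs at most a factor `‖A‖ * ‖η‖`, and the operator
norm of `A` is at most its Frobenius norm.
-/

lemma norm_sq_sum_of_pairwise_inner_eq_zero {𝕜 E ι : Type*} [RCLike 𝕜]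
    [SeminormedAddCommGroup E] [InnerProductSpace 𝕜 E] [Fintype ι] {x : ι → E}
    (hx : Pairwise fun i j => inner 𝕜 (x i) (x j) = 0) :
    ‖∑ i, x i‖ ^ 2 = ∑ i, ‖x i‖ ^ 2 := by
  have inner_sum_eq (i : ι) : inner 𝕜 (x i) (∑ j, x j) = ((‖x i‖ ^ 2 : ℝ) : 𝕜) := by
    rw [inner_sum, Fintype.sum_eq_single i fun j hj => hx hj.symm, inner_self_eq_norm_sq_to_K,
      RCLike.ofReal_pow]
  rw [← RCLike.ofReal_inj (K := 𝕜), RCLike.ofReal_pow, ← inner_self_eq_norm_sq_to_K, sum_inner,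
    RCLike.ofReal_sum]
  exact Finset.sum_congr rfl fun i _ => inner_sum_eq i

lemma hasDerivAt_piLp {𝕜 ι : Type*} [NontriviallyNormedField 𝕜] [Fintype ι] {p : ENNReal}
    [Fact (1 ≤ p)] {E : ι → Type*} [∀ i, NormedAddCommGroup (E i)] [∀ i, NormedSpace 𝕜 (E i)]
    {f : 𝕜 → PiLp p E} {f' : PiLp p E} {x : 𝕜} :
    HasDerivAt f f' x ↔ ∀ i, HasDerivAt (fun t => f t i) (f' i) x := by
  rw [← hasDerivWithinAt_univ, hasDerivWithinAt_iff_hasFDerivWithinAt, hasFDerivWithinAt_piLp]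
  refine forall_congr' fun i => ?_
  rw [← hasDerivWithinAt_univ, hasDerivWithinAt_iff_hasFDerivWithinAt]
  congr! 1

section PureTensor

variable {𝕜 ι : Type*} {κ : ι → Type*} [RCLike 𝕜] [Fintype ι]

/-- The elementary tensor `⨂ i, u i`, given by its coordinates in the product basis. It lives in a
`EuclideanSpace`, so that its norm is the Hilbert space norm of the tensor product. -/
def pureTensor (u : ∀ i, EuclideanSpace 𝕜 (κ i)) : EuclideanSpace 𝕜 (∀ i, κ i) :=
  WithLp.toLp 2 fun f => ∏ i, u i (f i)

variable [DecidableEq ι]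

lemma pureTensor_update_apply (u : ∀ i, EuclideanSpace 𝕜 (κ i)) (i : ι)
    (w : EuclideanSpace 𝕜 (κ i)) (f : ∀ i, κ i) :
    pureTensor (Function.update u i w) f = (∏ j ∈ Finset.univ.erase i, u j (f j)) * w (f i) := by
  change ∏ j, Function.update u i w j (f j) = _
  rw [← Finset.prod_erase_mul _ _ (Finset.mem_univ i), Function.update_self]
  congr 1
  refine Finset.prod_congr rfl fun j hj => ?_
  rw [Function.update_of_ne (Finset.ne_of_mem_erase hj)]

variable [∀ i, Fintype (κ i)]

lemma inner_pureTensor (u w : ∀ i, EuclideanSpace 𝕜 (κ i)) :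
    inner 𝕜 (pureTensor u) (pureTensor w) = ∏ i, inner 𝕜 (u i) (w i) := by
  simp only [PiLp.inner_apply, RCLike.inner_apply, pureTensor, map_prod, ← Finset.prod_mul_distrib]
  rw [Finset.prod_univ_sum, Fintype.piFinset_univ]

lemma norm_pureTensor (u : ∀ i, EuclideanSpace 𝕜 (κ i)) : ‖pureTensor u‖ = ∏ i, ‖u i‖ := by
  have norm_sq : ‖pureTensor u‖ ^ 2 = (∏ i, ‖u i‖) ^ 2 := by
    rw [← RCLike.ofReal_inj (K := 𝕜), RCLike.ofReal_pow, ← inner_self_eq_norm_sq_to_K,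
      inner_pureTensor]
    simp only [inner_self_eq_norm_sq_to_K, RCLike.ofReal_pow, RCLike.ofReal_prod, Finset.prod_pow]
  exact (sq_eq_sq₀ (norm_nonneg _) (by positivity)).mp norm_sq

lemma norm_pureTensor_update {u : ∀ i, EuclideanSpace 𝕜 (κ i)} (hu : ∀ i, ‖u i‖ = 1) (i : ι)
    (w : EuclideanSpace 𝕜 (κ i)) : ‖pureTensor (Function.update u i w)‖ = ‖w‖ := by
  rw [norm_pureTensor, Fintype.prod_eq_single i, Function.update_self]
  intro j hj
  rw [Function.update_of_ne hj, hu]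

lemma inner_pureTensor_update_update {u w : ∀ i, EuclideanSpace 𝕜 (κ i)} {i j : ι} (hij : i ≠ j)
    (hi : inner 𝕜 (w i) (u i) = 0) :
    inner 𝕜 (pureTensor (Function.update u i (w i))) (pureTensor (Function.update u j (w j))) =
      0 := by
  rw [inner_pureTensor]
  refine Finset.prod_eq_zero (Finset.mem_univ i) ?_
  rw [Function.update_self, Function.update_of_ne hij, hi]

lemma norm_sq_sum_pureTensor_update {u w : ∀ i, EuclideanSpace 𝕜 (κ i)} (hu : ∀ i, ‖u i‖ = 1)
    (hw : ∀ i, inner 𝕜 (w i) (u i) = 0) :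
    ‖∑ i, pureTensor (Function.update u i (w i))‖ ^ 2 = ∑ i, ‖w i‖ ^ 2 := by
  rw [norm_sq_sum_of_pairwise_inner_eq_zero (𝕜 := 𝕜) fun i _ hij =>
    inner_pureTensor_update_update hij (hw i)]
  simp only [norm_pureTensor_update hu]

lemma hasDerivAt_pureTensor {𝕂 : Type*} [NontriviallyNormedField 𝕂] [NormedAlgebra 𝕂 𝕜]
    {u : 𝕂 → ∀ i, EuclideanSpace 𝕜 (κ i)} {u' : ∀ i, EuclideanSpace 𝕜 (κ i)} {x : 𝕂}
    (hu : ∀ i, HasDerivAt (fun t => u t i) (u' i) x) :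
    HasDerivAt (fun t => pureTensor (u t))
      (∑ i, pureTensor (Function.update (u x) i (u' i))) x := by
  refine hasDerivAt_piLp.mpr fun f => ?_
  have leibniz : HasDerivAt (fun t => ∏ i, u t i (f i))
      (∑ i, (∏ j ∈ Finset.univ.erase i, u x j (f j)) • u' i (f i)) x :=
    HasDerivAt.fun_finsetProd fun i _ => hasDerivAt_piLp.mp (hu i) (f i)
  simp only [WithLp.ofLp_sum, Finset.sum_apply, pureTensor_update_apply]
  exact leibniz

end PureTensor

section CoherentSpinor

open WithLp (toLp)

lemma inner_vcoh (θ θ' φ : ℝ) :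
    inner ℂ (toLp 2 (vcoh θ φ)) (toLp 2 (vcoh θ' φ)) = (Real.cos ((θ - θ') / 2) : ℂ) := by
  have phase : Complex.exp (Complex.I * φ) * conj (Complex.exp (Complex.I * φ)) = 1 := by
    rw [Complex.mul_conj', mul_comm, Complex.norm_exp_ofReal_mul_I]
    norm_num
  rw [sub_div, Real.cos_sub]
  simp only [PiLp.inner_apply, RCLike.inner_apply, vcoh, Fin.sum_univ_two, Matrix.cons_val_zero,
    Matrix.cons_val_one, map_mul, Complex.conj_ofReal]
  push_cast
  linear_combination (Complex.sin (θ / 2) * Complex.sin (θ' / 2)) * phase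

lemma norm_vcoh (θ φ : ℝ) : ‖toLp 2 (vcoh θ φ)‖ = 1 := by
  rw [norm_eq_sqrt_re_inner (𝕜 := ℂ), inner_vcoh, sub_self, zero_div, Real.cos_zero]
  simp

lemma inner_vcoh_add_pi (θ φ : ℝ) :
    inner ℂ (toLp 2 (vcoh (θ + Real.pi) φ)) (toLp 2 (vcoh θ φ)) = 0 := by
  rw [inner_vcoh, add_sub_cancel_left, Real.cos_pi_div_two, Complex.ofReal_zero]

lemma hasDerivAt_vcoh (θ φ : ℝ) :
    HasDerivAt (fun t => toLp 2 (vcoh t φ)) ((1 / 2 : ℝ) • toLp 2 (vcoh (θ + Real.pi) φ)) θ := by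
  have half : HasDerivAt (fun t : ℝ => t / 2) (1 / 2) θ := (hasDerivAt_id θ).div_const 2
  rw [hasDerivAt_piLp, Fin.forall_fin_two]
  simp only [vcoh, add_div, Real.cos_add_pi_div_two, Real.sin_add_pi_div_two, PiLp.smul_apply,
    Matrix.cons_val_zero, Matrix.cons_val_one, Complex.real_smul]
  constructor
  · refine half.cos.ofReal_comp.congr_deriv ?_
    push_cast
    ring
  · refine (half.sin.ofReal_comp.const_mul (Complex.exp (Complex.I * φ))).congr_deriv ?_
    push_cast
    ring

lemma exists_hasDerivAt_tpow_vcoh_norm_eq (n : ℕ) (θ φ : ℝ) :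
    ∃ D, HasDerivAt (fun t => toLp 2 (tpow n (vcoh t φ))) D θ ∧ ‖D‖ = √n / 2 := by
  let u : Fin n → EuclideanSpace ℂ (Fin 2) := fun _ => toLp 2 (vcoh θ φ)
  let u' : Fin n → EuclideanSpace ℂ (Fin 2) :=
    fun _ => (1 / 2 : ℝ) • toLp 2 (vcoh (θ + Real.pi) φ)
  refine ⟨∑ i, pureTensor (Function.update u i (u' i)),
    hasDerivAt_pureTensor fun _ => hasDerivAt_vcoh θ φ, ?_⟩
  have norm_u' (i : Fin n) : ‖u' i‖ = 1 / 2 := by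
    rw [norm_smul, norm_vcoh]
    norm_num
  have orthogonal (i : Fin n) : inner ℂ (u' i) (u i) = 0 := by
    rw [inner_smul_left_eq_smul, inner_vcoh_add_pi, smul_zero]
  rw [← Real.sqrt_sq (norm_nonneg _),
    norm_sq_sum_pureTensor_update (fun _ => norm_vcoh θ φ) orthogonal]
  simp only [norm_u', Finset.sum_const, Finset.card_univ, Fintype.card_fin, nsmul_eq_mul]
  rw [Real.sqrt_mul n.cast_nonneg, Real.sqrt_sq (by norm_num), mul_one_div]

end CoherentSpinor

section StringSymbol

open WithLp (toLp)
open scoped Matrix.Norms.L2Operator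

lemma cinner_eq_inner {ι : Type} [Fintype ι] (ξ η : ι → ℂ) :
    cinner ξ η = inner ℂ (toLp 2 ξ) (toLp 2 η) := by
  simp only [cinner, PiLp.inner_apply, RCLike.inner_apply, mul_comm]

lemma l2_opNorm_le_sqrt_sum_norm_sq {𝕜 m k : Type*} [RCLike 𝕜] [Fintype m] [Fintype k]
    [DecidableEq k] (A : Matrix m k 𝕜) : ‖A‖ ≤ √(∑ i, ∑ j, ‖A i j‖ ^ 2) := by
  rw [Matrix.l2_opNorm_def]
  refine ContinuousLinearMap.opNorm_le_bound _ (Real.sqrt_nonneg _) fun x => ?_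
  rw [EuclideanSpace.norm_eq, EuclideanSpace.norm_eq, ← Real.sqrt_mul (by positivity),
    Finset.sum_mul]
  refine Real.sqrt_le_sqrt (Finset.sum_le_sum fun i _ => ?_)
  calc ‖∑ j, A i j * x j‖ ^ 2 ≤ (∑ j, ‖A i j‖ * ‖x j‖) ^ 2 := by
        gcongr
        exact norm_sum_le_of_le _ fun j _ => norm_mul_le _ _
    _ ≤ (∑ j, ‖A i j‖ ^ 2) * ∑ j, ‖x j‖ ^ 2 := Finset.sum_mul_sq_le_sq_mul_sq _ _ _

theorem string_symbol_gradient_bound_general {m : Type} [Fintype m] (n : ℕ)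
    (A : Matrix m (Fin n → Fin 2) ℂ) (η : m → ℂ) (φ₀ θ : ℝ) :
    ∃ d : ℂ, HasDerivAt (fun t : ℝ => cinner η (A.mulVec (tpow n (vcoh t φ₀)))) d θ ∧
      ‖d‖ ≤ ‖toLp 2 η‖ * ‖A‖ * (√n / 2) := by
  obtain ⟨D, hasDerivAt_D, norm_D⟩ := exists_hasDerivAt_tpow_vcoh_norm_eq n θ φ₀
  let T : EuclideanSpace ℂ (Fin n → Fin 2) →L[ℂ] EuclideanSpace ℂ m :=
    (Matrix.toEuclideanLin.trans LinearMap.toContinuousLinearMap) A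
  let L : EuclideanSpace ℂ (Fin n → Fin 2) →L[ℂ] ℂ := innerSL ℂ (toLp 2 η) ∘L T
  refine ⟨L D, ?_, ?_⟩
  · have L_toLp (x : (Fin n → Fin 2) → ℂ) : L (toLp 2 x) = cinner η (A.mulVec x) :=
      (cinner_eq_inner η (A.mulVec x)).symm
    have hasDerivAt_L : HasDerivAt (fun t => L (toLp 2 (tpow n (vcoh t φ₀)))) (L D) θ :=
      (L.restrictScalars ℝ).hasFDerivAt.comp_hasDerivAt θ hasDerivAt_D
    simpa only [L_toLp] using hasDerivAt_L
  · have norm_T_le : ‖T D‖ ≤ ‖A‖ * ‖D‖ := by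
      rw [Matrix.l2_opNorm_def]
      exact T.le_opNorm D
    calc ‖L D‖ ≤ ‖toLp 2 η‖ * ‖T D‖ :=
        norm_inner_le_norm (𝕜 := ℂ) (toLp 2 η) (T D)
      _ ≤ ‖toLp 2 η‖ * (‖A‖ * ‖D‖) := mul_le_mul_of_nonneg_left norm_T_le (norm_nonneg _)
      _ = ‖toLp 2 η‖ * ‖A‖ * (√n / 2) := by rw [norm_D, mul_assoc]

end StringSymbol

/-- if ‖A‖_F ≤ 1 and ‖η‖ = 1, then the string symbol
    f(θ) = ⟨η, A(v(θ,φ₀)^{⊗n})⟩ is differentiable with |f′(θ)| ≤ √n / 2. -/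
theorem string_symbol_gradient_bound (n : ℕ) (hn : 1 ≤ n)
    (A : Matrix (Fin n → Fin 2) (Fin n → Fin 2) ℂ)
    (hA : ∑ f, ∑ g, ‖A f g‖ ^ 2 ≤ 1)
    (η : (Fin n → Fin 2) → ℂ) (hη : ∑ f, ‖η f‖ ^ 2 = 1) (φ₀ : ℝ) :
    ∀ θ : ℝ, ∃ d : ℂ,
      HasDerivAt (fun t : ℝ => cinner η (A.mulVec (tpow n (vcoh t φ₀)))) d θ ∧
      ‖d‖ ≤ Real.sqrt n / 2 := by
  intro θ
  obtain ⟨d, hasDerivAt_d, norm_d_le⟩ := string_symbol_gradient_bound_general n A η φ₀ θ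
  have norm_η : ‖WithLp.toLp 2 η‖ = 1 := by rw [EuclideanSpace.norm_eq, hη, Real.sqrt_one]
  have norm_A_le := (l2_opNorm_le_sqrt_sum_norm_sq A).trans (Real.sqrt_le_one.mpr hA)
  rw [norm_η, one_mul] at norm_d_le
  exact ⟨d, hasDerivAt_d, norm_d_le.trans (mul_le_of_le_one_left (by positivity) norm_A_le)⟩
end
end

section
/- Let N ≥ 2, n = N−1, and ξ(θ,φ) = v(θ,φ)^{⊗n}. Then for all (θ₁,φ₁) and (θ₂,φ₂): (N/(4π)) ∫₀^{2π} ∫₀^{π} ⟨ξ(θ₁,φ₁), ξ(θ,φ)⟩ ⟨ξ(θ,φ), ξ(θ₂,φ₂)⟩ sin θ dθ dφ = ⟨ξ(θ₁,φ₁), ξ(θ₂,φ₂)⟩. (This is the overcompleteness relation 1 = (N/4π)∫_{S²} |x⟩⟨x| dx for coherent states on the fuzzy sphere, evaluated between arbitrary coherent states.) -/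
open scoped BigOperators ComplexConjugate
open Matrix

noncomputable section

/-!
Expand both inner products in the standard basis of `(ℂ²)^{⊗n}`, indexed by bit strings
`f : Fin n → Fin 2`. The entry of `ξ(θ,φ)` at `f` depends on `f` only through its Hamming weight
`j`: it is `cos(θ/2)^{n-j} (e^{iφ} sin(θ/2))^j`. Hence in `∫ |ξ⟩⟨ξ|` the `φ`-integral kills the
entries between distinct weights, and the `θ`-integral is the Beta integral `2 B(j+1, n-j+1)`, so
that, up to the factor `4π/(n+1)`, the entries between strings of equal weight `j` are
`1 / (n choose j)`. This matrix averages over bit strings of equal weight, that is, it is the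
projection onto the permutation-invariant tensors.
-/

section BitStrings

open Finset

/-- A tensor, given by its coordinates in the product basis indexed by `ι → κ`, is symmetric:
permuting the tensor factors does not change it. -/
def IsPermInvariant {ι κ M : Type*} (ξ : (ι → κ) → M) : Prop :=
  ∀ (σ : Equiv.Perm ι) (f : ι → κ), ξ (f ∘ σ) = ξ f

variable {ι : Type*} [Fintype ι]

lemma exists_perm_comp_eq {κ : Type*} [DecidableEq κ] {f g : ι → κ}
    (h : ∀ k, #{i | f i = k} = #{i | g i = k}) : ∃ σ : Equiv.Perm ι, f ∘ σ = g := by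
  have fiberEquiv (k : κ) : Nonempty ({i // g i = k} ≃ {i // f i = k}) :=
    Fintype.card_eq.mp <| by simp_rw [Fintype.card_subtype, h]
  exact ⟨Equiv.ofFiberEquiv fun k ↦ (fiberEquiv k).some, funext (Equiv.ofFiberEquiv_map _)⟩

lemma card_filter_eq_one (f : ι → Fin 2) : #{i | f i = 1} = hammingNorm f :=
  congrArg card (filter_congr fun i _ ↦ by lia)

lemma card_filter_eq_zero (f : ι → Fin 2) :
    #{i | f i = 0} = Fintype.card ι - hammingNorm f := by
  rw [eq_tsub_iff_add_eq_of_le hammingNorm_le_card_fintype]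
  exact card_filter_add_card_filter_not _

lemma card_filter_hammingNorm_eq [DecidableEq ι] (k : ℕ) :
    #{f : ι → Fin 2 | hammingNorm f = k} = (Fintype.card ι).choose k := by
  rw [← card_univ, ← card_powersetCard]
  refine card_nbij' (fun f ↦ ({i | f i ≠ 0} : Finset ι)) (fun s i ↦ if i ∈ s then 1 else 0)
    (fun f hf ↦ ?_) (fun s hs ↦ ?_) (fun f _ ↦ funext fun i ↦ ?_) (fun s _ ↦ by simp)
  · simpa [hammingNorm] using hf
  · simpa [hammingNorm] using hs
  · simp only [mem_filter_univ]
    lia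

lemma IsPermInvariant.apply_eq_of_hammingNorm_eq {M : Type*} {ξ : (ι → Fin 2) → M}
    (hξ : IsPermInvariant ξ) {f g : ι → Fin 2} (h : hammingNorm f = hammingNorm g) :
    ξ f = ξ g := by
  obtain ⟨σ, rfl⟩ : ∃ σ : Equiv.Perm ι, f ∘ σ = g := exists_perm_comp_eq <|
    Fin.forall_fin_two.mpr ⟨by simp_rw [card_filter_eq_zero, h], by simp_rw [card_filter_eq_one, h]⟩
  exact (hξ σ f).symm

lemma IsPermInvariant.sum_filter_hammingNorm_eq [DecidableEq ι] {M : Type*} [AddCommMonoid M]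
    {ξ : (ι → Fin 2) → M} (hξ : IsPermInvariant ξ) (f : ι → Fin 2) :
    ∑ g with hammingNorm g = hammingNorm f, ξ g =
      (Fintype.card ι).choose (hammingNorm f) • ξ f := by
  rw [← card_filter_hammingNorm_eq]
  exact sum_eq_card_nsmul fun g hg ↦ hξ.apply_eq_of_hammingNorm_eq (mem_filter.mp hg).2

lemma isPermInvariant_tpow (n : ℕ) (u : Fin 2 → ℂ) : IsPermInvariant (tpow n u) :=
  fun σ f ↦ Equiv.prod_comp σ fun i ↦ u (f i)

lemma tpow_apply_eq_pow_mul_pow {n : ℕ} (u : Fin 2 → ℂ) (f : Fin n → Fin 2) :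
    tpow n u f = u 0 ^ (n - hammingNorm f) * u 1 ^ hammingNorm f := by
  simp_rw [tpow, ← prod_fiberwise' univ f u, Fin.prod_univ_two, prod_const, card_filter_eq_zero,
    card_filter_eq_one, Fintype.card_fin]

lemma cinner_mul_cinner {ι : Type} [Fintype ι] (ξ₁ η ξ₂ : ι → ℂ) :
    cinner ξ₁ η * cinner η ξ₂ =
      ∑ p : ι × ι, conj (ξ₁ p.1) * ξ₂ p.2 * (η p.1 * conj (η p.2)) := by
  simp_rw [cinner, Fintype.sum_mul_sum, Fintype.sum_prod_type]
  exact sum_congr rfl fun f _ ↦ sum_congr rfl fun g _ ↦ by ring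

end BitStrings

section Integrals

open Real

lemma integral_exp_int_mul_I_mul (m : ℤ) :
    ∫ φ in 0..2 * π, Complex.exp (m * Complex.I * φ) = if m = 0 then 2 * (π : ℂ) else 0 := by
  split_ifs with hm
  · simp [hm]
  · have hmI : (m : ℂ) * Complex.I ≠ 0 := mul_ne_zero (mod_cast hm) Complex.I_ne_zero
    have period : (m : ℂ) * Complex.I * (2 * π : ℝ) = m * (2 * π * Complex.I) := by
      push_cast; ring
    rw [integral_exp_mul_complex hmI, period, Complex.exp_int_mul_two_pi_mul_I]
    simp

lemma integral_pow_mul_one_sub_pow (p q : ℕ) :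
    ∫ x in (0 : ℝ)..1, x ^ p * (1 - x) ^ q = 1 / ((p + q + 1) * (p + q).choose q) := by
  have beta : Complex.betaIntegral (p + 1) (q + 1) =
      ((∫ x in (0 : ℝ)..1, x ^ p * (1 - x) ^ q : ℝ) : ℂ) := by
    rw [← intervalIntegral.integral_ofReal]
    simp [Complex.betaIntegral]
  have gamma : (p.factorial * q.factorial : ℝ) =
      (p + q + 1).factorial * ∫ x in (0 : ℝ)..1, x ^ p * (1 - x) ^ q := by
    have := Complex.Gamma_mul_Gamma_eq_betaIntegral (s := p + 1) (t := q + 1)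
      (by norm_cast; positivity) (by norm_cast; positivity)
    rw [beta, show (p + 1 + (q + 1) : ℂ) = (p + q + 1 : ℕ) + 1 by push_cast; ring] at this
    simp only [Complex.Gamma_nat_eq_factorial] at this
    exact_mod_cast this
  have choose_pos := Nat.choose_pos (Nat.le_add_left q p)
  rw [Nat.factorial_succ, ← Nat.add_choose_mul_factorial_mul_factorial] at gamma
  push_cast at gamma
  rw [eq_div_iff (by positivity)]
  refine mul_left_cancel₀ (by positivity : (p.factorial * q.factorial : ℝ) ≠ 0) ?_
  linear_combination -gamma

lemma integral_sin_half_pow_mul_cos_half_pow_mul_sin (p q : ℕ) :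
    ∫ θ in 0..π, sin (θ / 2) ^ (2 * p) * cos (θ / 2) ^ (2 * q) * sin θ =
      2 / ((p + q + 1) * (p + q).choose q) := by
  have hasDerivAt_sin_half_sq (θ : ℝ) :
      HasDerivAt (fun θ ↦ sin (θ / 2) ^ 2) (sin θ / 2) θ := by
    refine (((hasDerivAt_id θ).div_const 2).sin.pow 2).congr_deriv ?_
    rw [show sin θ = sin (2 * (θ / 2)) by ring_nf, sin_two_mul]
    simp only [id_eq]
    ring
  calc ∫ θ in 0..π, sin (θ / 2) ^ (2 * p) * cos (θ / 2) ^ (2 * q) * sin θ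
    _ = ∫ θ in 0..π, 2 * ((sin (θ / 2) ^ 2) ^ p * (1 - sin (θ / 2) ^ 2) ^ q * (sin θ / 2)) := by
      congr! 2 with θ
      rw [← cos_sq']
      ring
    _ = 2 * ∫ x in (0 : ℝ)..1, x ^ p * (1 - x) ^ q := by
      rw [intervalIntegral.integral_const_mul]
      have := intervalIntegral.integral_comp_mul_deriv (a := 0) (b := π)
        (g := fun x : ℝ ↦ x ^ p * (1 - x) ^ q)
        (fun θ _ ↦ hasDerivAt_sin_half_sq θ) (by fun_prop) (by fun_prop)
      simpa using this
    _ = 2 / ((p + q + 1) * (p + q).choose q) := by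
      rw [integral_pow_mul_one_sub_pow, mul_one_div]

lemma integral_integral_finset_sum {ι E : Type*} [NormedAddCommGroup E] [NormedSpace ℝ E]
    (s : Finset ι) {F : ι → ℝ → ℝ → E} (hF : ∀ i ∈ s, Continuous (F i).uncurry) (a b c d : ℝ) :
    ∫ x in a..b, ∫ y in c..d, ∑ i ∈ s, F i x y = ∑ i ∈ s, ∫ x in a..b, ∫ y in c..d, F i x y := by
  have inner_sum (x : ℝ) : ∫ y in c..d, ∑ i ∈ s, F i x y = ∑ i ∈ s, ∫ y in c..d, F i x y :=
    intervalIntegral.integral_finsetSum fun i hi ↦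
      ((hF i hi).uncurry_left x).intervalIntegrable c d
  have inner_continuous (i : ι) (hi : i ∈ s) : Continuous fun x ↦ ∫ y in c..d, F i x y :=
    intervalIntegral.continuous_parametric_intervalIntegral_of_continuous' (hF i hi) c d
  simp_rw [inner_sum]
  exact intervalIntegral.integral_finsetSum fun i hi ↦
    (inner_continuous i hi).intervalIntegrable a b

end Integrals

section CoherentStates

open Real

section Continuity

variable {X : Type*} [TopologicalSpace X]

@[fun_prop]
lemma continuous_vcoh {θ φ : X → ℝ} (hθ : Continuous θ) (hφ : Continuous φ) :
    Continuous fun x ↦ vcoh (θ x) (φ x) := by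
  refine continuous_pi fun k ↦ ?_
  fin_cases k <;> simp only [vcoh, Fin.zero_eta, Fin.mk_one, cons_val_zero, cons_val_one] <;>
    fun_prop

@[fun_prop]
lemma continuous_tpow (n : ℕ) {u : X → Fin 2 → ℂ} (hu : Continuous u) :
    Continuous fun x ↦ tpow n (u x) := by
  unfold tpow
  fun_prop

end Continuity

variable {n : ℕ}

lemma tpow_vcoh_mul_conj (f g : Fin n → Fin 2) (θ φ : ℝ) :
    tpow n (vcoh θ φ) f * conj (tpow n (vcoh θ φ) g) =
      Complex.exp ((hammingNorm f - hammingNorm g : ℤ) * Complex.I * φ) *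
        (sin (θ / 2) ^ (hammingNorm f + hammingNorm g) *
          cos (θ / 2) ^ (n - hammingNorm f + (n - hammingNorm g)) : ℝ) := by
  have phase : Complex.exp ((hammingNorm f - hammingNorm g : ℤ) * Complex.I * φ) =
      Complex.exp (Complex.I * φ) ^ hammingNorm f *
        conj (Complex.exp (Complex.I * φ)) ^ hammingNorm g := by
    rw [← Complex.exp_conj, ← Complex.exp_nat_mul, ← Complex.exp_nat_mul, ← Complex.exp_add,
      map_mul, Complex.conj_I, Complex.conj_ofReal]
    push_cast
    ring_nf
  rw [phase]
  simp only [tpow_apply_eq_pow_mul_pow, vcoh, cons_val_zero, cons_val_one, map_mul, map_pow,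
    Complex.conj_ofReal]
  push_cast
  ring

lemma integral_tpow_vcoh_mul_conj (f g : Fin n → Fin 2) :
    ∫ φ in 0..2 * π, ∫ θ in 0..π,
        tpow n (vcoh θ φ) f * conj (tpow n (vcoh θ φ) g) * sin θ =
      if hammingNorm g = hammingNorm f then
        4 * (π : ℂ) / ((n + 1) * n.choose (hammingNorm f)) else 0 := by
  simp_rw [tpow_vcoh_mul_conj, mul_assoc (Complex.exp _), intervalIntegral.integral_const_mul,
    intervalIntegral.integral_mul_const, integral_exp_int_mul_I_mul, sub_eq_zero, Nat.cast_inj,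
    eq_comm (a := hammingNorm f)]
  split_ifs with h
  · have le : hammingNorm f ≤ n := by simpa using hammingNorm_le_card_fintype (x := f)
    have theta := integral_sin_half_pow_mul_cos_half_pow_mul_sin (hammingNorm f) (n - hammingNorm f)
    rw [← Nat.cast_add, Nat.add_sub_cancel' le, Nat.choose_symm le] at theta
    simp_rw [h, ← two_mul, ← Complex.ofReal_mul, intervalIntegral.integral_ofReal, theta]
    push_cast
    ring
  · simp

lemma integral_cinner_tpow_vcoh_mul_cinner (ξ₁ ξ₂ : (Fin n → Fin 2) → ℂ) :
    ∫ φ in 0..2 * π, ∫ θ in 0..π,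
        cinner ξ₁ (tpow n (vcoh θ φ)) * cinner (tpow n (vcoh θ φ)) ξ₂ * sin θ =
      ∑ f, conj (ξ₁ f) * (4 * (π : ℂ) / ((n + 1) * n.choose (hammingNorm f)) *
        ∑ g with hammingNorm g = hammingNorm f, ξ₂ g) := by
  simp_rw [cinner_mul_cinner, Finset.sum_mul, mul_assoc (_ * _) (_ * _) ((sin _ : ℝ) : ℂ)]
  rw [integral_integral_finset_sum _ fun p _ ↦ by unfold Function.uncurry; fun_prop]
  simp_rw [intervalIntegral.integral_const_mul, integral_tpow_vcoh_mul_conj, Fintype.sum_prod_type,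
    mul_ite, mul_zero, ← Finset.sum_filter, Finset.mul_sum]
  exact Finset.sum_congr rfl fun f _ ↦ Finset.sum_congr rfl fun g _ ↦ by ring

theorem coherent_state_completeness_general (ξ₁ : (Fin n → Fin 2) → ℂ)
    {ξ₂ : (Fin n → Fin 2) → ℂ} (hξ₂ : IsPermInvariant ξ₂) :
    ((n + 1 : ℂ) / (4 * (π : ℂ))) *
      ∫ φ in 0..2 * π, ∫ θ in 0..π,
        cinner ξ₁ (tpow n (vcoh θ φ)) * cinner (tpow n (vcoh θ φ)) ξ₂ * sin θ
      = cinner ξ₁ ξ₂ := by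
  rw [integral_cinner_tpow_vcoh_mul_cinner, cinner, Finset.mul_sum]
  refine Finset.sum_congr rfl fun f _ ↦ ?_
  have le : hammingNorm f ≤ n := by simpa using hammingNorm_le_card_fintype (x := f)
  have choose_ne_zero : (n.choose (hammingNorm f) : ℂ) ≠ 0 := mod_cast (Nat.choose_pos le).ne'
  have succ_ne_zero : (n + 1 : ℂ) ≠ 0 := n.cast_add_one_ne_zero
  rw [hξ₂.sum_filter_hammingNorm_eq, Fintype.card_fin, nsmul_eq_mul]
  field_simp

end CoherentStates

/-- the overcompleteness relation 1 = (N/4π)∫_{S²} |x⟩⟨x| dx for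
    coherent states ξ(θ,φ) = v(θ,φ)^{⊗(N−1)}, evaluated between arbitrary coherent
    states: (N/4π) ∫₀^{2π}∫₀^{π} ⟨ξ₁, ξ(θ,φ)⟩⟨ξ(θ,φ), ξ₂⟩ sin θ dθ dφ = ⟨ξ₁, ξ₂⟩. -/
theorem coherent_state_completeness (N : ℕ) (hN : 2 ≤ N) (θ₁ φ₁ θ₂ φ₂ : ℝ) :
    ((N : ℂ) / (4 * (Real.pi : ℂ))) *
      ∫ φ in (0:ℝ)..(2 * Real.pi), ∫ θ in (0:ℝ)..Real.pi,
        cinner (tpow (N - 1) (vcoh θ₁ φ₁)) (tpow (N - 1) (vcoh θ φ)) *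
          cinner (tpow (N - 1) (vcoh θ φ)) (tpow (N - 1) (vcoh θ₂ φ₂)) *
          (Real.sin θ : ℂ)
      = cinner (tpow (N - 1) (vcoh θ₁ φ₁)) (tpow (N - 1) (vcoh θ₂ φ₂)) := by
  obtain ⟨n, rfl⟩ := Nat.exists_eq_add_of_le' (one_le_two.trans hN)
  simpa using coherent_state_completeness_general (tpow n (vcoh θ₁ φ₁))
    (isPermInvariant_tpow n (vcoh θ₂ φ₂))
end
end

section
/- For all integers N ≥ 1 and 0 ≤ l ≤ N−1: (N−l−1)! (N+l)! / ((N−1)!)² = N · Π_{m=1}^{l} (N+m)/(N−m), and this quantity is at least N · e^{l²/N}. (This is the exact product formula and exponential lower bound for the normalization constants 4π c_l² relating fuzzy and classical spherical harmonics, underlying the asymptotics c_l² ∼ (N/4π) e^{N x²} with x = l/N.) -/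
open scoped BigOperators

/-!
The product formula holds because the numerators `N + m` multiply to the rising factorial
`(N + l)! / N!` and the denominators `N - m` to the falling factorial `(N - 1)! / (N - 1 - l)!`.
For the bound, `2 x ≤ log ((1 + x) / (1 - x))` at `x = m / N` gives
`exp (2 m / N) ≤ (N + m) / (N - m)`, and multiplying over `1 ≤ m ≤ l` even yields the exponent
`l (l + 1) / N`.
-/

section ProductFormula

open scoped Nat

lemma prod_Icc_cast_add_eq_ascFactorial {R : Type*} [CommSemiring R] (n l : ℕ) :
    ∏ m ∈ Finset.Icc 1 l, ((n : R) + m) = ((n + 1).ascFactorial l : R) := by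
  induction l with
  | zero => simp
  | succ l ih =>
    rw [Finset.prod_Icc_succ_top (Nat.le_add_left 1 l), ih, Nat.ascFactorial_succ]
    push_cast
    ring

lemma prod_Icc_cast_add_one_sub_eq_descFactorial {R : Type*} [CommRing R] (n l : ℕ) :
    ∏ m ∈ Finset.Icc 1 l, ((n : R) + 1 - m) = (n.descFactorial l : R) := by
  induction l with
  | zero => simp
  | succ l ih =>
    rw [Finset.prod_Icc_succ_top (Nat.le_add_left 1 l), ih, Nat.descFactorial_succ, Nat.cast_mul]
    rcases le_or_gt l n with hln | hnl
    · rw [Nat.cast_sub hln]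
      push_cast
      ring
    · simp only [Nat.descFactorial_of_lt hnl, Nat.cast_zero, zero_mul, mul_zero]

lemma factorial_mul_factorial_div_sq_eq_prod {K : Type*} [Field K] [CharZero K] {n l : ℕ}
    (hl : l ≤ n) :
    (((n - l)! * (n + 1 + l)! : ℕ) : K) / (n ! : K) ^ 2 =
      (n + 1) * ∏ m ∈ Finset.Icc 1 l, ((n : K) + 1 + m) / ((n : K) + 1 - m) := by
  have hrising : ∏ m ∈ Finset.Icc 1 l, ((n : K) + 1 + m) = ((n + 2).ascFactorial l : K) := by
    exact_mod_cast prod_Icc_cast_add_eq_ascFactorial (R := K) (n + 1) l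
  have hdesc_ne : (n.descFactorial l : K) ≠ 0 :=
    Nat.cast_ne_zero.2 (Nat.descFactorial_eq_zero_iff_lt.not.2 hl.not_gt)
  have hfact_ne : (n ! : K) ≠ 0 := Nat.cast_ne_zero.2 n.factorial_ne_zero
  rw [Finset.prod_div_distrib, hrising, prod_Icc_cast_add_one_sub_eq_descFactorial, mul_div_assoc',
    div_eq_div_iff (pow_ne_zero 2 hfact_ne) hdesc_ne]
  norm_cast
  calc (n - l)! * (n + 1 + l)! * n.descFactorial l
      = ((n - l)! * n.descFactorial l) * (n + 1 + l)! := by ring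
    _ = n ! * ((n + 1)! * (n + 2).ascFactorial l) := by
      rw [Nat.factorial_mul_descFactorial hl, Nat.factorial_mul_ascFactorial]
    _ = (n + 1) * (n + 2).ascFactorial l * n ! ^ 2 := by
      rw [Nat.factorial_succ]
      ring

end ProductFormula

section ExponentialBound

open Real

lemma exp_two_mul_le_one_add_div_one_sub {x : ℝ} (h₀ : 0 ≤ x) (h₁ : x < 1) :
    exp (2 * x) ≤ (1 + x) / (1 - x) := by
  have hlog : x ≤ 1 / 2 * log ((1 + x) / (1 - x)) := by
    simpa using sum_range_le_log_div h₀ h₁ 1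
  rw [← le_log_iff_exp_le (div_pos (by linarith) (by linarith))]
  linarith

lemma exp_two_mul_div_le_add_div_sub {a x : ℝ} (h₀ : 0 ≤ x) (hxa : x < a) :
    exp (2 * (x / a)) ≤ (a + x) / (a - x) := by
  have ha : 0 < a := h₀.trans_lt hxa
  calc exp (2 * (x / a)) ≤ (1 + x / a) / (1 - x / a) :=
        exp_two_mul_le_one_add_div_one_sub (by positivity) ((div_lt_one ha).2 hxa)
    _ = (a + x) / (a - x) := by
      rw [one_add_div ha.ne', one_sub_div ha.ne', div_div_div_cancel_right₀ ha.ne']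

lemma exp_two_mul_sum_div_le_prod {ι : Type*} {s : Finset ι} {x : ι → ℝ} {a : ℝ}
    (h₀ : ∀ i ∈ s, 0 ≤ x i) (hxa : ∀ i ∈ s, x i < a) :
    exp (2 * ((∑ i ∈ s, x i) / a)) ≤ ∏ i ∈ s, (a + x i) / (a - x i) := by
  rw [Finset.sum_div, Finset.mul_sum, exp_sum]
  exact Finset.prod_le_prod (fun i _ ↦ (exp_pos _).le)
    fun i hi ↦ exp_two_mul_div_le_add_div_sub (h₀ i hi) (hxa i hi)

lemma two_mul_sum_Icc_one_cast {R : Type*} [CommSemiring R] (l : ℕ) :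
    2 * ∑ m ∈ Finset.Icc 1 l, (m : R) = l * (l + 1) := by
  induction l with
  | zero => simp
  | succ l ih =>
    rw [Finset.sum_Icc_succ_top (Nat.le_add_left 1 l), mul_add, ih]
    push_cast
    ring

lemma exp_mul_add_one_div_le_prod {a : ℝ} {l : ℕ} (hl : l < a) :
    exp (l * (l + 1) / a) ≤ ∏ m ∈ Finset.Icc 1 l, (a + m) / (a - m) := by
  rw [← two_mul_sum_Icc_one_cast, mul_div_assoc]
  refine exp_two_mul_sum_div_le_prod (fun m _ ↦ m.cast_nonneg) fun m hm ↦ ?_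
  exact (Nat.cast_le.2 (Finset.mem_Icc.1 hm).2).trans_lt hl

lemma exp_sq_div_le_prod {a : ℝ} {l : ℕ} (hl : l < a) :
    exp ((l : ℝ) ^ 2 / a) ≤ ∏ m ∈ Finset.Icc 1 l, (a + m) / (a - m) := by
  have ha : 0 ≤ a := l.cast_nonneg.trans hl.le
  refine le_trans ?_ (exp_mul_add_one_div_le_prod hl)
  gcongr
  nlinarith [l.cast_nonneg (α := ℝ)]

end ExponentialBound

/-- for 0 ≤ l ≤ N−1,
    (N−l−1)! (N+l)! / ((N−1)!)² = N · Π_{m=1}^{l} (N+m)/(N−m), and this quantity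
    is at least N · e^{l²/N}  (the normalization constants 4π c_l²). -/
theorem fuzzy_normalization_product (N l : ℕ) (hN : 1 ≤ N) (hl : l ≤ N - 1) :
    (((N - l - 1).factorial * (N + l).factorial : ℕ) : ℝ) / ((N - 1).factorial : ℝ) ^ 2
        = (N : ℝ) * ∏ m ∈ Finset.Icc 1 l, ((N : ℝ) + (m : ℝ)) / ((N : ℝ) - (m : ℝ)) ∧
      (N : ℝ) * Real.exp ((l : ℝ) ^ 2 / (N : ℝ))
        ≤ (((N - l - 1).factorial * (N + l).factorial : ℕ) : ℝ)
            / ((N - 1).factorial : ℝ) ^ 2 := by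
  have hlN : l < N := by omega
  have hprod : (((N - l - 1).factorial * (N + l).factorial : ℕ) : ℝ) / ((N - 1).factorial : ℝ) ^ 2
      = (N : ℝ) * ∏ m ∈ Finset.Icc 1 l, ((N : ℝ) + (m : ℝ)) / ((N : ℝ) - (m : ℝ)) := by
    have h := factorial_mul_factorial_div_sq_eq_prod (K := ℝ) hl
    rwa [Nat.sub_right_comm, Nat.sub_add_cancel hN, Nat.cast_pred hN, sub_add_cancel] at h
  refine ⟨hprod, ?_⟩
  rw [hprod]
  exact mul_le_mul_of_nonneg_left (exp_sq_div_le_prod (Nat.cast_lt.2 hlN)) N.cast_nonneg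
end

section
/- For every natural number k: ∫_{−1}^{1} (1 − P_k(u))/(1−u) du = 2 Σ_{n=1}^{k} 1/n, where P_k is the k-th Legendre polynomial. (This is the key integral identity used to evaluate the string symbol of the propagator on the fuzzy sphere.) -/
open scoped BigOperators

noncomputable section

/-- The k-th Legendre polynomial, via the Rodrigues formula
    P_k(u) = (1/(2^k k!)) dᵏ/duᵏ (u² − 1)^k. -/
def legendreP (k : ℕ) (u : ℝ) : ℝ :=
  (1 / ((2 : ℝ) ^ k * (k.factorial : ℝ))) *
    iteratedDeriv k (fun x : ℝ => (x ^ 2 - 1) ^ k) u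

/-!
The quotient `(1 - P_k(u)) / (1 - u)` has an explicit polynomial antiderivative. Indeed
`(1 - u) (P_n' + P_{n+1}') = (n + 1) (P_n - P_{n+1})`, so dividing by `n + 1` and telescoping over
`n < k` gives `(1 - u) H_k' = P_0 - P_k = 1 - P_k` for `H_k = ∑_{n < k} (P_n + P_{n+1}) / (n + 1)`.
Since `P_n(1) = 1` and `P_n(-1) = (-1)^n`, the integral is
`H_k(1) - H_k(-1) = ∑_{n < k} 2 / (n + 1)`.

The identity follows from two first-order recurrences, both obtained by differentiating
`(X² - 1)^(n+1)` in two ways: as `(X² - 1) · (X² - 1)^n`, and through its first derivative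
`2 (n + 1) X (X² - 1)^n`.
-/

open Polynomial
open scoped Nat

section Rodrigues

variable {R : Type*} [CommRing R]

theorem iterate_derivative_succ_X_sq_sub_one_mul (p : R[X]) (n : ℕ) :
    derivative^[n + 1] ((X ^ 2 - 1) * p) =
      (X ^ 2 - 1) * derivative^[n + 1] p + 2 * (n + 1 : R[X]) * X * derivative^[n] p +
        (n + 1 : R[X]) * (n : R[X]) * derivative^[n - 1] p := by
  rw [show (X ^ 2 - 1) * p = p * X * X - p by ring, iterate_derivative_sub]
  simp only [iterate_derivative_mul_X, Nat.add_sub_cancel, nsmul_eq_mul]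
  push_cast
  ring

theorem iterate_derivative_succ_X_sq_sub_one_pow_succ (m n : ℕ) :
    derivative^[n + 1] ((X ^ 2 - 1 : R[X]) ^ (m + 1)) =
      2 * (m + 1 : R[X]) * (X * derivative^[n] ((X ^ 2 - 1) ^ m) +
        (n : R[X]) * derivative^[n - 1] ((X ^ 2 - 1) ^ m)) := by
  have derivative_eq : derivative ((X ^ 2 - 1 : R[X]) ^ (m + 1)) =
      ((2 * (m + 1) : ℕ) : R[X]) * ((X ^ 2 - 1) ^ m * X) := by
    simp only [derivative_pow_succ, map_add, map_natCast, map_one, derivative_sub, Nat.cast_one,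
      pow_one, derivative_X, mul_one, derivative_one, sub_zero, Nat.cast_mul, Nat.cast_ofNat,
      Nat.cast_add]
    ring
  rw [Function.iterate_succ_apply, derivative_eq, iterate_derivative_natCast_mul,
    iterate_derivative_mul_X, nsmul_eq_mul]
  push_cast
  ring

theorem iterate_derivative_X_sq_sub_one_pow_succ_self (n : ℕ) :
    derivative^[n + 1] ((X ^ 2 - 1 : R[X]) ^ (n + 1)) =
      2 * ((X ^ 2 - 1) * derivative^[n + 1] ((X ^ 2 - 1) ^ n) +
        (n + 1 : R[X]) * X * derivative^[n] ((X ^ 2 - 1) ^ n)) := by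
  have via_product := iterate_derivative_succ_X_sq_sub_one_mul ((X ^ 2 - 1 : R[X]) ^ n) n
  rw [← pow_succ'] at via_product
  -- This combination eliminates the derivative of order `n - 1`.
  linear_combination 2 * via_product -
    iterate_derivative_succ_X_sq_sub_one_pow_succ (R := R) n n

end Rodrigues

section LegendrePolynomial

variable (K : Type*) [Field K]

/-- The `n`-th Legendre polynomial as an element of `K[X]`, normalised as in the Rodrigues formula;
it has this meaning only in characteristic zero, where `2 ^ n * n !` is invertible. -/
def legendrePolynomial (n : ℕ) : K[X] :=
  C ((2 ^ n * n ! : K)⁻¹) * derivative^[n] ((X ^ 2 - 1) ^ n)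

/-- An antiderivative, in characteristic zero, of `(1 - P_k(u)) / (1 - u)`, with `P_k` the `k`-th
Legendre polynomial; this is `H_k` above. -/
def legendreQuotientAntiderivative (k : ℕ) : K[X] :=
  ∑ n ∈ Finset.range k,
    C ((n + 1 : K)⁻¹) * (legendrePolynomial K n + legendrePolynomial K (n + 1))

@[simp]
theorem legendrePolynomial_zero : legendrePolynomial K 0 = 1 := by
  simp [legendrePolynomial]

theorem derivative_legendrePolynomial (n : ℕ) :
    derivative (legendrePolynomial K n) =
      C ((2 ^ n * n ! : K)⁻¹) * derivative^[n + 1] ((X ^ 2 - 1) ^ n) := by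
  rw [legendrePolynomial, derivative_C_mul, Function.iterate_succ_apply']

variable [CharZero K]

theorem two_mul_succ_mul_C_inv_two_pow_mul_factorial_succ (n : ℕ) :
    2 * (n + 1 : K[X]) * C ((2 ^ (n + 1) * (n + 1)! : K)⁻¹) = C ((2 ^ n * n ! : K)⁻¹) := by
  have scalar_eq : 2 * (n + 1 : K) * (2 ^ (n + 1) * (n + 1)! : K)⁻¹ = (2 ^ n * n ! : K)⁻¹ := by
    have := Nat.cast_add_one_ne_zero (R := K) n
    rw [Nat.factorial_succ, pow_succ]
    push_cast
    field_simp
  simpa only [C_mul, C_add, C_1, C_ofNat, map_natCast] using congrArg C scalar_eq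

theorem derivative_legendrePolynomial_succ (n : ℕ) :
    derivative (legendrePolynomial K (n + 1)) =
      X * derivative (legendrePolynomial K n) + (n + 1 : K[X]) * legendrePolynomial K n := by
  rw [derivative_legendrePolynomial, derivative_legendrePolynomial, legendrePolynomial,
    iterate_derivative_succ_X_sq_sub_one_pow_succ,
    ← two_mul_succ_mul_C_inv_two_pow_mul_factorial_succ K n, Nat.add_sub_cancel]
  push_cast
  ring

theorem succ_mul_legendrePolynomial_succ (n : ℕ) :
    (n + 1 : K[X]) * legendrePolynomial K (n + 1) =
      (X ^ 2 - 1) * derivative (legendrePolynomial K n) +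
        (n + 1 : K[X]) * X * legendrePolynomial K n := by
  rw [derivative_legendrePolynomial, legendrePolynomial, legendrePolynomial,
    iterate_derivative_X_sq_sub_one_pow_succ_self,
    ← two_mul_succ_mul_C_inv_two_pow_mul_factorial_succ K n]
  ring

theorem one_sub_X_mul_derivative_legendrePolynomial_add_succ (n : ℕ) :
    (1 - X) * derivative (legendrePolynomial K n + legendrePolynomial K (n + 1)) =
      (n + 1 : K[X]) * (legendrePolynomial K n - legendrePolynomial K (n + 1)) := by
  rw [derivative_add]
  linear_combination (1 - X) * derivative_legendrePolynomial_succ K n +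
    succ_mul_legendrePolynomial_succ K n

theorem eval_legendrePolynomial_of_sq_eq_one {x : K} (hx : x ^ 2 = 1) (n : ℕ) :
    (legendrePolynomial K n).eval x = x ^ n := by
  induction n with
  | zero => simp
  | succ n ih =>
    have h := congrArg (eval x) (succ_mul_legendrePolynomial_succ K n)
    simp only [eval_mul, eval_add, eval_sub, eval_pow, eval_X, eval_one, eval_natCast, hx, ih,
      sub_self, zero_mul, zero_add, mul_assoc, ← pow_succ'] at h
    exact mul_left_cancel₀ (Nat.cast_add_one_ne_zero n) h

theorem one_sub_X_mul_derivative_legendreQuotientAntiderivative (k : ℕ) :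
    (1 - X) * derivative (legendreQuotientAntiderivative K k) = 1 - legendrePolynomial K k := by
  have summand_eq (n : ℕ) :
      (1 - X) * derivative (C ((n + 1 : K)⁻¹) *
        (legendrePolynomial K n + legendrePolynomial K (n + 1))) =
      legendrePolynomial K n - legendrePolynomial K (n + 1) := by
    have inv_mul : C ((n + 1 : K)⁻¹) * (n + 1 : K[X]) = 1 := by
      rw [← map_natCast C, ← C_1, ← C_add, ← C_mul,
        inv_mul_cancel₀ (Nat.cast_add_one_ne_zero n)]
    rw [derivative_C_mul, mul_left_comm, one_sub_X_mul_derivative_legendrePolynomial_add_succ,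
      ← mul_assoc, inv_mul, one_mul]
  rw [legendreQuotientAntiderivative, derivative_sum, Finset.mul_sum]
  simp only [summand_eq, Finset.sum_range_sub', legendrePolynomial_zero]

theorem eval_derivative_legendreQuotientAntiderivative {u : K} (hu : u ≠ 1) (k : ℕ) :
    (derivative (legendreQuotientAntiderivative K k)).eval u =
      (1 - (legendrePolynomial K k).eval u) / (1 - u) := by
  have h := congrArg (eval u) (one_sub_X_mul_derivative_legendreQuotientAntiderivative K k)
  simp only [eval_mul, eval_sub, eval_one, eval_X] at h
  exact eq_div_of_mul_eq (sub_ne_zero.mpr hu.symm) (by rw [mul_comm, h])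

theorem eval_one_legendreQuotientAntiderivative (k : ℕ) :
    (legendreQuotientAntiderivative K k).eval 1 = 2 * (harmonic k : K) := by
  simp [legendreQuotientAntiderivative, eval_finsetSum, eval_legendrePolynomial_of_sq_eq_one,
    harmonic, Finset.mul_sum, one_add_one_eq_two, mul_comm]

theorem eval_neg_one_legendreQuotientAntiderivative (k : ℕ) :
    (legendreQuotientAntiderivative K k).eval (-1) = 0 := by
  simp [legendreQuotientAntiderivative, eval_finsetSum, eval_legendrePolynomial_of_sq_eq_one,
    pow_succ]

end LegendrePolynomial

theorem iteratedDeriv_polynomial_eval {𝕜 : Type*} [NontriviallyNormedField 𝕜] (p : 𝕜[X]) (n : ℕ) :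
    iteratedDeriv n (fun x => p.eval x) = fun x => (derivative^[n] p).eval x := by
  induction n with
  | zero => simp
  | succ n ih =>
    ext x
    rw [iteratedDeriv_succ, ih, Polynomial.deriv, Function.iterate_succ_apply']

theorem legendreP_eq_eval (k : ℕ) (u : ℝ) : legendreP k u = (legendrePolynomial ℝ k).eval u := by
  have h := congrFun (iteratedDeriv_polynomial_eval ((X ^ 2 - 1 : ℝ[X]) ^ k) k) u
  simp only [eval_pow, eval_sub, eval_X, eval_one] at h
  rw [legendreP, legendrePolynomial, h, eval_mul, eval_C, one_div]

theorem integral_eval_derivative (p : ℝ[X]) (a b : ℝ) :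
    ∫ x in a..b, (derivative p).eval x = p.eval b - p.eval a :=
  intervalIntegral.integral_eq_sub_of_hasDerivAt (fun x _ => p.hasDerivAt x)
    ((derivative p).continuous.intervalIntegrable a b)

/-- ∫_{−1}^{1} (1 − P_k(u))/(1−u) du = 2 Σ_{n=1}^{k} 1/n. -/
theorem legendre_harmonic_integral (k : ℕ) :
    ∫ u in (-1 : ℝ)..1, (1 - legendreP k u) / (1 - u)
      = 2 * ∑ n ∈ Finset.Icc 1 k, (1 / (n : ℝ)) := by
  calc ∫ u in (-1 : ℝ)..1, (1 - legendreP k u) / (1 - u)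
      = ∫ u in (-1 : ℝ)..1, (derivative (legendreQuotientAntiderivative ℝ k)).eval u := by
        refine intervalIntegral.integral_congr_Ioo_of_le (by norm_num) fun u hu => ?_
        rw [legendreP_eq_eval, eval_derivative_legendreQuotientAntiderivative ℝ hu.2.ne]
    _ = 2 * (harmonic k : ℝ) := by
        rw [integral_eval_derivative, eval_one_legendreQuotientAntiderivative,
          eval_neg_one_legendreQuotientAntiderivative, sub_zero]
    _ = 2 * ∑ n ∈ Finset.Icc 1 k, (1 / (n : ℝ)) := by
        simp only [harmonic_eq_sum_Icc, Rat.cast_sum, Rat.cast_inv, Rat.cast_natCast, one_div]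
end
end

section
/- For every real m̃ > 0: lim_{N→∞} Σ_{l=0}^{⌊√N⌋} (2l+1)/(l(l+1) + N m̃²) = ln(1 + 1/m̃²), where the limit is over integers N → ∞. (This is the exact large-N evaluation of the coincident-point propagator N·⟨x|x| (□+m²)^{−1} |x|x⟩ in the regime m² = N m̃² of masses comparable to the noncommutativity scale.) -/
open scoped BigOperators
open Filter

/-!
Since `2l + 1 = (l + 1)² - l²` and `l² ≤ l(l + 1) ≤ (l + 1)²`, the sum is a Riemann sum of `x⁻¹`
over the partition of `[A, n² + A]` by the points `l² + A`, with tags `l(l + 1) + A`. For a monotone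
integrand the error is at most the mesh times the variation of the integrand, here
`2n / A = O(N ^ (-1/2))`, and the integral is `log (1 + n² / A)`, where `n² / A → 1 / m̃²`.
-/

open Set Topology

theorem abs_sub_mul_sub_integral_le_of_antitoneOn {f : ℝ → ℝ} {a b t : ℝ}
    (hf : AntitoneOn f (Icc a b)) (ht : t ∈ Icc a b) :
    |(b - a) * f t - ∫ x in a..b, f x| ≤ (b - a) * (f a - f b) := by
  have hab : a ≤ b := ht.1.trans ht.2
  have hf_int : IntervalIntegrable f MeasureTheory.volume a b :=
    AntitoneOn.intervalIntegrable (by rwa [uIcc_of_le hab])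
  have hf_mem : ∀ x ∈ Icc a b, f x ∈ Icc (f b) (f a) := fun x hx ↦
    ⟨hf hx (right_mem_Icc.2 hab) hx.2, hf (left_mem_Icc.2 hab) hx hx.1⟩
  have h_eq : (b - a) * f t - ∫ x in a..b, f x = ∫ x in a..b, (f t - f x) := by
    rw [intervalIntegral.integral_sub intervalIntegrable_const hf_int,
      intervalIntegral.integral_const, smul_eq_mul]
  have h_le : ∀ x ∈ uIoc a b, ‖f t - f x‖ ≤ f a - f b := fun x hx ↦ by
    rw [uIoc_of_le hab] at hx
    exact Real.dist_le_of_mem_Icc (hf_mem t ht) (hf_mem x (Ioc_subset_Icc_self hx))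
  calc |(b - a) * f t - ∫ x in a..b, f x|
      ≤ (f a - f b) * |b - a| := by
        rw [h_eq]
        exact intervalIntegral.norm_integral_le_of_norm_le_const h_le
    _ = (b - a) * (f a - f b) := by rw [abs_of_nonneg (sub_nonneg.2 hab), mul_comm]

theorem abs_sum_sub_mul_sub_integral_le_of_antitoneOn {f : ℝ → ℝ} {u t : ℕ → ℝ} {δ : ℝ} {n : ℕ}
    (hf : AntitoneOn f (Icc (u 0) (u n))) (ht : ∀ l, t l ∈ Icc (u l) (u (l + 1)))
    (hδ : ∀ l < n, u (l + 1) - u l ≤ δ) :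
    |∑ l ∈ Finset.range n, (u (l + 1) - u l) * f (t l) - ∫ x in u 0..u n, f x| ≤
      δ * (f (u 0) - f (u n)) := by
  have hu : Monotone u := monotone_nat_of_le_succ fun l ↦ (ht l).1.trans (ht l).2
  have hf_cell : ∀ l < n, AntitoneOn f (Icc (u l) (u (l + 1))) := fun l hl ↦
    hf.mono (Icc_subset_Icc (hu l.zero_le) (hu hl))
  have hf_int : ∀ l < n, IntervalIntegrable f MeasureTheory.volume (u l) (u (l + 1)) :=
    fun l hl ↦ AntitoneOn.intervalIntegrable (by
      rw [uIcc_of_le (hu l.le_succ)]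
      exact hf_cell l hl)
  rw [← intervalIntegral.sum_integral_adjacent_intervals hf_int, ← Finset.sum_sub_distrib]
  calc |∑ l ∈ Finset.range n, ((u (l + 1) - u l) * f (t l) - ∫ x in u l..u (l + 1), f x)|
      ≤ ∑ l ∈ Finset.range n, |(u (l + 1) - u l) * f (t l) - ∫ x in u l..u (l + 1), f x| :=
        Finset.abs_sum_le_sum_abs _ _
    _ ≤ ∑ l ∈ Finset.range n, δ * (f (u l) - f (u (l + 1))) := by
        refine Finset.sum_le_sum fun l hl ↦ ?_
        have hln : l < n := Finset.mem_range.1 hl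
        have h_anti : f (u (l + 1)) ≤ f (u l) :=
          hf_cell l hln (left_mem_Icc.2 (hu l.le_succ)) (right_mem_Icc.2 (hu l.le_succ))
            (hu l.le_succ)
        exact (abs_sub_mul_sub_integral_le_of_antitoneOn (hf_cell l hln) (ht l)).trans
          (mul_le_mul_of_nonneg_right (hδ l hln) (sub_nonneg.2 h_anti))
    _ = δ * (f (u 0) - f (u n)) := by
        rw [← Finset.mul_sum, Finset.sum_range_sub' fun l ↦ f (u l)]

theorem abs_sum_two_mul_add_one_div_sub_log_le {A : ℝ} (hA : 0 < A) (n : ℕ) :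
    |∑ l ∈ Finset.range n, (2 * (l : ℝ) + 1) / ((l : ℝ) * ((l : ℝ) + 1) + A) -
      Real.log (1 + (n : ℝ) ^ 2 / A)| ≤ 2 * n / A := by
  let u : ℕ → ℝ := fun l ↦ (l : ℝ) ^ 2 + A
  let t : ℕ → ℝ := fun l ↦ (l : ℝ) * (l + 1) + A
  have hu_zero : u 0 = A := by simp [u]
  have hu_pos : ∀ l, 0 < u l := fun l ↦ by positivity
  have hu_sub : ∀ l, u (l + 1) - u l = 2 * l + 1 := fun l ↦ by
    simp only [u]
    push_cast
    ring
  have ht : ∀ l, t l ∈ Icc (u l) (u (l + 1)) := fun l ↦ by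
    constructor <;> simp only [u, t] <;> push_cast <;>
      nlinarith only [Nat.cast_nonneg (α := ℝ) l]
  have h_mesh : ∀ l < n, u (l + 1) - u l ≤ 2 * n := fun l hl ↦ by
    have : (l : ℝ) + 1 ≤ n := by exact_mod_cast hl
    linarith [hu_sub l]
  have h_anti : AntitoneOn (fun x : ℝ ↦ x⁻¹) (Icc (u 0) (u n)) := fun x hx y _ hxy ↦
    inv_anti₀ ((hu_pos 0).trans_le hx.1) hxy
  have h_integral : ∫ x in u 0..u n, x⁻¹ = Real.log (1 + (n : ℝ) ^ 2 / A) := by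
    rw [integral_inv_of_pos (hu_pos 0) (hu_pos n), hu_zero, add_comm 1, div_add_one hA.ne']
  have h_error := abs_sum_sub_mul_sub_integral_le_of_antitoneOn h_anti ht h_mesh
  simp only [h_integral, hu_sub, ← div_eq_mul_inv] at h_error
  calc _ ≤ 2 * n * ((u 0)⁻¹ - (u n)⁻¹) := h_error
    _ ≤ 2 * n * (u 0)⁻¹ := by
        gcongr
        exact sub_le_self _ (inv_nonneg.2 (hu_pos n).le)
    _ = 2 * n / A := by rw [hu_zero, div_eq_mul_inv]

theorem tendsto_div_zero_of_tendsto_sq_div {ι : Type*} {F : Filter ι} {A x : ι → ℝ} {c : ℝ}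
    (hA : Tendsto A F atTop) (hx : Tendsto (fun i ↦ x i ^ 2 / A i) F (𝓝 c)) :
    Tendsto (fun i ↦ x i / A i) F (𝓝 0) := by
  have h_sq : Tendsto (fun i ↦ (x i / A i) ^ 2) F (𝓝 0) := by
    simpa only [div_div, ← sq, ← div_pow] using hx.div_atTop hA
  rw [tendsto_zero_iff_abs_tendsto_zero]
  simpa only [Function.comp_def, Real.sqrt_sq_eq_abs, Real.sqrt_zero] using h_sq.sqrt

theorem tendsto_floor_sqrt_add_one_sq_div_atTop :
    Tendsto (fun x : ℝ ↦ ((⌊√x⌋₊ + 1 : ℕ) : ℝ) ^ 2 / x) atTop (𝓝 1) := by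
  have h_floor : Tendsto (fun y : ℝ ↦ ((⌊y⌋₊ : ℝ) / y + y⁻¹) ^ 2) atTop (𝓝 1) := by
    simpa only [add_zero, one_pow] using
      ((tendsto_nat_floor_div_atTop (R := ℝ)).add tendsto_inv_atTop_zero).pow 2
  refine (h_floor.comp Real.tendsto_sqrt_atTop).congr' ?_
  filter_upwards [eventually_ge_atTop 0] with x hx
  rw [Function.comp_apply, inv_eq_one_div, ← add_div, div_pow, Real.sq_sqrt hx]
  push_cast
  rfl

theorem propagator_coincident_large_mass_general {ι : Type*} {F : Filter ι} {A : ι → ℝ}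
    {n : ι → ℕ} {c : ℝ} (hA : Tendsto A F atTop)
    (hn : Tendsto (fun i ↦ (n i : ℝ) ^ 2 / A i) F (𝓝 c)) :
    Tendsto
      (fun i ↦ ∑ l ∈ Finset.range (n i),
        (2 * (l : ℝ) + 1) / ((l : ℝ) * ((l : ℝ) + 1) + A i))
      F (𝓝 (Real.log (1 + c))) := by
  rcases F.eq_or_neBot with rfl | _
  · exact tendsto_bot
  have hA_pos : ∀ᶠ i in F, 0 < A i := hA.eventually_gt_atTop 0
  have hc : 0 ≤ c := ge_of_tendsto hn (hA_pos.mono fun i hi ↦ by positivity)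
  have h_log : Tendsto (fun i ↦ Real.log (1 + (n i : ℝ) ^ 2 / A i)) F (𝓝 (Real.log (1 + c))) :=
    (hn.const_add 1).log (by positivity)
  have h_bound : Tendsto (fun i ↦ 2 * (n i : ℝ) / A i) F (𝓝 0) := by
    simpa only [mul_div_assoc, mul_zero] using
      (tendsto_div_zero_of_tendsto_sq_div hA hn).const_mul 2
  have h_error : Tendsto
      (fun i ↦ ∑ l ∈ Finset.range (n i), (2 * (l : ℝ) + 1) / ((l : ℝ) * ((l : ℝ) + 1) + A i) -
        Real.log (1 + (n i : ℝ) ^ 2 / A i))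
      F (𝓝 0) :=
    squeeze_zero_norm' (hA_pos.mono fun i hi ↦ abs_sum_two_mul_add_one_div_sub_log_le hi (n i))
      h_bound
  simpa only [sub_add_cancel, zero_add] using h_error.add h_log

/-- for m̃ > 0,
    lim_{N→∞} Σ_{l=0}^{⌊√N⌋} (2l+1)/(l(l+1) + N m̃²) = ln(1 + 1/m̃²). -/
theorem propagator_coincident_large_mass (mt : ℝ) (hmt : 0 < mt) :
    Tendsto
      (fun N : ℕ => ∑ l ∈ Finset.range (⌊Real.sqrt N⌋₊ + 1),
        (2 * (l : ℝ) + 1) / ((l : ℝ) * ((l : ℝ) + 1) + (N : ℝ) * mt ^ 2))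
      atTop (nhds (Real.log (1 + 1 / mt ^ 2))) :=
  propagator_coincident_large_mass_general
    (tendsto_natCast_atTop_atTop.atTop_mul_const (by positivity))
    (by simpa only [Function.comp_def, div_div] using (tendsto_floor_sqrt_add_one_sq_div_atTop.comp
      tendsto_natCast_atTop_atTop).div_const (mt ^ 2))
end
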